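/- arXiv:2010.01860 — 4 statements merged into one kernel-verified Lean document; each statement's English description precedes it below -/
import Mathlib

section
/- There exist an irrational α ∈ (0,1) and irrational numbers 0 < β₁ < β₂ < 1 with β₁ ≠ 1 − α, β₂ ≠ 1 − α, β₁ ∉ ℤ + αℤ, β₂ ∉ ℤ + αℤ and β₂ − β₁ ∉ ℤ + αℤ, such that, taking d = 2, r = 2 and the permutations σ₀ = σ₂ = identity of {1,2} and σ₁ = the exchange of {1,2}, the generalized Veech–Sataev system T is uniquely ergodic, its language L(T) is not linearly recurrent, and T is not rigid with respect to its unique invariant Borel probability measure. -/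
open MeasureTheory Filter Set
open scoped ENNReal symmDiff Classical

noncomputable section

/-! ### Generic measurable dynamics -/

/-- `(X, T, μ)` is rigid: for some sequence `q n → ∞`, `μ (T^[q n] '' A ∆ A) → 0`
for every measurable set `A`. -/
def Rigid {X : Type*} [MeasurableSpace X] (T : X → X) (μ : Measure X) : Prop :=
  ∃ q : ℕ → ℕ, Tendsto q atTop atTop ∧
    ∀ A : Set X, MeasurableSet A →
      Tendsto (fun n => μ (((T^[q n]) '' A) ∆ A)) atTop (nhds 0)

/-- `T` is uniquely ergodic: it admits exactly one invariant Borel probability measure. -/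
def UniquelyErgodicMap {X : Type*} [MeasurableSpace X] (T : X → X) : Prop :=
  ∃! μ : Measure X, IsProbabilityMeasure μ ∧ MeasurePreserving T μ μ

/-- `(X, T, μ)` is of rank one. -/
def RankOne {X : Type*} [MeasurableSpace X] (T : X → X) (μ : Measure X) : Prop :=
  ∃ F : ℕ → Set X, ∃ h : ℕ → ℕ, (∀ n, 1 ≤ h n) ∧ (∀ n, MeasurableSet (F n)) ∧
    (∀ n, ∀ i < h n, ∀ j < h n, i ≠ j → Disjoint ((T^[i]) '' F n) ((T^[j]) '' F n)) ∧
    ∀ A : Set X, MeasurableSet A → ∀ ε : ℝ≥0∞, 0 < ε → ∃ n : ℕ, ∃ s : Finset ℕ, ∃ rem : Bool,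
      (∀ i ∈ s, i < h n) ∧
      μ (A ∆ ((⋃ i ∈ s, (T^[i]) '' F n) ∪
        (if rem then (⋃ i ∈ Finset.range (h n), (T^[i]) '' F n)ᶜ else (∅ : Set X)))) < ε

/-! ### Words, languages, symbolic systems -/

/-- `w` is a factor of `v`. -/
def IsFactor {A : Type*} (w v : List A) : Prop := ∃ u u' : List A, v = u ++ w ++ u'

/-- `L` is a language: nonempty, closed under factors, and every word extends to a longer one. -/
def IsLanguage {A : Type*} (L : Set (List A)) : Prop :=
  L.Nonempty ∧ (∀ v ∈ L, ∀ w : List A, IsFactor w v → w ∈ L) ∧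
    (∀ w ∈ L, ∃ v ∈ L, w.length < v.length ∧ IsFactor w v)

/-- `L` is linearly recurrent: for some `K`, every word of length `n` occurs in
every word of length at least `K n`. -/
def LinearlyRecurrent {A : Type*} (L : Set (List A)) : Prop :=
  ∃ K : ℕ, 1 ≤ K ∧ ∀ w ∈ L, ∀ v ∈ L, K * w.length ≤ v.length → IsFactor w v

/-- `L` is minimal. -/
def MinimalLang {A : Type*} (L : Set (List A)) : Prop :=
  ∀ w ∈ L, ∃ n : ℕ, ∀ v ∈ L, v.length = n → IsFactor w v

/-- The factor of a sequence starting at `i`, of length `s`. -/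
def wordAt {A : Type*} (x : ℕ → A) (i s : ℕ) : List A := List.ofFn fun j : Fin s => x (i + j)

/-- The subshift `X_L`: sequences all of whose finite factors lie in `L`. -/
def XL {A : Type*} (L : Set (List A)) : Set (ℕ → A) := {x | ∀ i s : ℕ, wordAt x i s ∈ L}

/-- The one-sided shift `S` on `X_L`. -/
def shiftXL {A : Type*} (L : Set (List A)) (x : XL L) : XL L :=
  ⟨fun n => x.1 (n + 1), fun i s => by
    have h := x.2 (i + 1) s
    have e : wordAt (fun n => x.1 (n + 1)) i s = wordAt x.1 (i + 1) s := by
      unfold wordAt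
      refine congrArg List.ofFn (funext fun j => congrArg x.1 ?_)
      omega
    rw [e]
    exact h⟩

/-- The cylinder `[w] ⊆ X_L` of a word `w`. -/
def langCylinder {A : Type*} (L : Set (List A)) (w : List A) : Set (XL L) :=
  {x | ∀ i : Fin w.length, x.1 i = w.get i}

/-- `e_n(S, μ)`: the smallest positive measure of a cylinder of a word of `L` of length `n`. -/
def cylMinMeasure {A : Type*} [MeasurableSpace A] (L : Set (List A))
    (μ : Measure (XL L)) (n : ℕ) : ℝ≥0∞ :=
  sInf {v : ℝ≥0∞ | ∃ w ∈ L, w.length = n ∧ v = μ (langCylinder L w) ∧ 0 < v}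

/-! ### Continued fraction data of `α` -/

/-- `ℤ + αℤ`. -/
def ZPlusAlphaZ (α : ℝ) : Set ℝ := {x | ∃ m k : ℤ, x = (m : ℝ) + (k : ℝ) * α}

/-- `(α_{n-1}, α_n)` computed by the Euclidean algorithm, with `α_{-1} = 1`, `α_0 = α`. -/
def cfPair (α : ℝ) : ℕ → ℝ × ℝ
  | 0 => (1, α)
  | n + 1 =>
    ((cfPair α n).2, (cfPair α n).1 - (⌊(cfPair α n).1 / (cfPair α n).2⌋ : ℝ) * (cfPair α n).2)

/-- `α_n = |q_n α - p_n|`. -/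
def alphaSeq (α : ℝ) (n : ℕ) : ℝ := (cfPair α n).2

/-- The partial quotient `a_n = ⌊α_{n-2} / α_{n-1}⌋` (meaningful for `n ≥ 1`). -/
def pq (α : ℝ) (n : ℕ) : ℕ := (⌊(cfPair α (n - 1)).1 / (cfPair α (n - 1)).2⌋).toNat

/-- `(q_{n-1}, q_n)`, with `q_{-1} = 0`, `q_0 = 1` and `q_{n+1} = a_{n+1} q_n + q_{n-1}`. -/
def qPair (α : ℝ) : ℕ → ℕ × ℕ
  | 0 => (0, 1)
  | n + 1 => ((qPair α n).2, pq α (n + 1) * (qPair α n).2 + (qPair α n).1)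

/-- `q_n`. -/
def qDen (α : ℝ) (n : ℕ) : ℕ := (qPair α n).2

/-- `α` has bounded partial quotients. -/
def BoundedPartialQuotients (α : ℝ) : Prop := ∃ C : ℕ, ∀ n : ℕ, 1 ≤ n → pq α n ≤ C

/-! ### Rokhlin towers for the rotation and Ostrowski digits -/

/-- `x` lies in the arc `[a, a + l)` modulo 1. -/
def inArc (x a l : ℝ) : Prop := ∃ m : ℤ, a ≤ x + m ∧ x + m < a + l

/-- Left endpoint of the basis `B_n` of the large `n`-tower. -/
def largeBase (α : ℝ) (n : ℕ) : ℝ :=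
  if Odd n then α - alphaSeq α (n - 1) + alphaSeq α n else α - alphaSeq α n

/-- Left endpoint of the basis `B'_n` of the small `n`-tower. -/
def smallBase (α : ℝ) (n : ℕ) : ℝ :=
  if Odd n then α - alphaSeq α (n - 1) else α + alphaSeq α (n - 1) - alphaSeq α n

/-- Membership in the basis `B_n` of the large `n`-tower. -/
def InLargeBase (α : ℝ) (n : ℕ) (x : ℝ) : Prop := inArc x (largeBase α n) (alphaSeq α (n - 1))

/-- Distance from `x` to the reference endpoint (left endpoint for `n` odd, right
endpoint for `n` even) of the level `k` of the large `n`-tower. -/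
def levelDist (α : ℝ) (n k : ℕ) (x : ℝ) : ℝ :=
  if Odd n then x - (largeBase α n + (k : ℝ) * α)
  else (largeBase α n + alphaSeq α (n - 1) + (k : ℝ) * α) - x

/-- `x` lies in column `(b)` of the large `n`-tower. -/
def InLargeColumn (α : ℝ) (n b : ℕ) (x : ℝ) : Prop :=
  ∃ k : ℕ, k < qDen α n ∧
    inArc (levelDist α n k x) ((b : ℝ) * alphaSeq α n)
      (if b = pq α (n + 1) then alphaSeq α (n - 1) - (pq α (n + 1) : ℝ) * alphaSeq α n
       else alphaSeq α n)

/-- `x` lies in the small `n`-tower. -/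
def InSmallTower (α : ℝ) (n : ℕ) (x : ℝ) : Prop :=
  ∃ k : ℕ, k < (qPair α n).1 ∧ inArc x (smallBase α n + (k : ℝ) * α) (alphaSeq α n)

/-- The Ostrowski digit `b_m(β)` (meaningful for `m ≥ 2`), read in the towers at stage `m - 1`:
it is `b` if `β` lies in column `(b)` of the large `(m-1)`-tower with `b ≥ 1`, and `0`
otherwise. -/
def ostB (α β : ℝ) (m : ℕ) : ℕ :=
  if h : ∃ b : ℕ, 1 ≤ b ∧ InLargeColumn α (m - 1) b β then h.choose else 0

/-! ### Isolation and clustering of marked points -/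

/-- The marked point `β_j` (with `β_j ≠ 1 - α`) is `(n, M)`-isolated. -/
def BetaIsolated {r : ℕ} (α : ℝ) (β : Fin r → ℝ) (j : Fin r) (n M : ℕ) : Prop :=
  (∃ m₁ : ℕ, n - M ≤ m₁ ∧ m₁ ≤ n ∧ ostB α (β j) m₁ ≠ pq α m₁ - 1) ∧
  (∃ m₂ : ℕ, n - M ≤ m₂ ∧ m₂ ≤ n ∧ Odd m₂ ∧ ostB α (β j) m₂ ≠ pq α m₂) ∧
  (∃ m₃ : ℕ, n - M ≤ m₃ ∧ m₃ ≤ n ∧ Even m₃ ∧ ostB α (β j) m₃ ≠ pq α m₃) ∧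
  ∀ i : Fin r, i ≠ j → β i ≠ 1 - α →
    ∃ m' : ℕ, n - M ≤ m' ∧ m' ≤ n ∧ ostB α (β j) m' ≠ ostB α (β i) m'

/-- The point `α` is `(n, M)`-isolated. -/
def AlphaIsolated {r : ℕ} (α : ℝ) (β : Fin r → ℝ) (n M : ℕ) : Prop :=
  ∀ i : Fin r, β i ≠ 1 - α →
    (∃ m : ℕ, n - M ≤ m ∧ m ≤ n ∧ ostB α (β i) m ≠ pq α m - 1) ∧
    (∃ m' : ℕ, n - M ≤ m' ∧ m' ≤ n ∧ Odd m' ∧ ostB α (β i) m' ≠ pq α m') ∧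
    (∃ m'' : ℕ, n - M ≤ m'' ∧ m'' ≤ n ∧ Even m'' ∧ ostB α (β i) m'' ≠ pq α m'')

/-- All the marked points `β_i` (with `β_i ≠ 1 - α`) cluster on `α`. -/
def ClusterOnAlpha {r : ℕ} (α : ℝ) (β : Fin r → ℝ) : Prop :=
  ∃ m N : ℕ → ℕ, Tendsto m atTop atTop ∧ Tendsto N atTop atTop ∧
    (∀ k : ℕ, m k + N k < m (k + 1)) ∧
    ∀ k : ℕ, ∀ i : Fin r, β i ≠ 1 - α →
      (∀ n, m k ≤ n → n ≤ m k + N k → ostB α (β i) n = pq α n - 1) ∨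
      (∀ n, m k ≤ n → n ≤ m k + N k → Even n → ostB α (β i) n = pq α n) ∨
      (∀ n, m k ≤ n → n ≤ m k + N k → Odd n → ostB α (β i) n = pq α n)

/-! ### The generalized Veech–Sataev system -/

instance : Fact ((0 : ℝ) < 1) := ⟨zero_lt_one⟩

/-- The representative in `[0, 1)` of a point of the circle `ℝ/ℤ`. -/
def circleRepr (x : AddCircle (1 : ℝ)) : ℝ := (AddCircle.equivIco 1 0 x).1

/-- The rotation `R` of angle `α` on the circle. -/
def rotMap (α : ℝ) : AddCircle (1 : ℝ) → AddCircle (1 : ℝ) := fun x => x + (α : AddCircle (1 : ℝ))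

/-- The index `j ∈ {0, …, r}` such that `β_j ≤ x < β_{j+1}` (with `β_0 = 0`,
`β_{r+1} = 1`), i.e. the number of marked points `≤ x`. -/
def atomIdx {r : ℕ} (β : Fin r → ℝ) (x : ℝ) : Fin (r + 1) :=
  ⟨(Finset.univ.filter fun i => β i ≤ x).card,
    Nat.lt_succ_of_le (le_trans (Finset.card_filter_le _ _) (by simp))⟩

/-- The permutation `σ(x)`. -/
def sigmaOf {r d : ℕ} (β : Fin r → ℝ) (σ : Fin (r + 1) → Equiv.Perm (Fin d)) (x : ℝ) :
    Equiv.Perm (Fin d) := σ (atomIdx β x)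

/-- The generalized Veech–Sataev map `T(x, s) = (Rx, σ(x) s)` on `(ℝ/ℤ) × {1, …, d}`. -/
def VST {r d : ℕ} (α : ℝ) (β : Fin r → ℝ) (σ : Fin (r + 1) → Equiv.Perm (Fin d)) :
    AddCircle (1 : ℝ) × Fin d → AddCircle (1 : ℝ) × Fin d :=
  fun p => (rotMap α p.1, sigmaOf β σ (circleRepr p.1) p.2)

/-- Standing conditions on the marked points `β_1 < … < β_r`. -/
def MarkedPointsCond {r : ℕ} (α : ℝ) (β : Fin r → ℝ) : Prop :=
  (∀ i : Fin r, Irrational (β i) ∧ 0 < β i ∧ β i < 1) ∧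
  StrictMono β ∧
  (∀ i : Fin r, β i ≠ 1 - α → β i ∉ ZPlusAlphaZ α) ∧
  (∀ i j : Fin r, i ≠ j → β i ≠ 1 - α → β j ≠ 1 - α → β i - β j ∉ ZPlusAlphaZ α)

/-- Adjacent permutations are distinct: `σ_j ≠ σ_{j+1}` for `0 ≤ j ≤ r - 1`. -/
def SigmaAdjacentCond {r d : ℕ} (σ : Fin (r + 1) → Equiv.Perm (Fin d)) : Prop :=
  ∀ j : Fin r, σ j.castSucc ≠ σ j.succ

/-- The minimality condition: no nonempty proper subset of `{1, …, d}` is invariant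
under all the `σ_i`. -/
def MinimalityCondition {r d : ℕ} (σ : Fin (r + 1) → Equiv.Perm (Fin d)) : Prop :=
  ¬ ∃ A : Set (Fin d), A.Nonempty ∧ A ≠ Set.univ ∧ ∀ j : Fin (r + 1), (σ j) '' A = A

/-- The product inequality. -/
def ProductInequality {r d : ℕ} (α : ℝ) (β : Fin r → ℝ)
    (σ : Fin (r + 1) → Equiv.Perm (Fin d)) : Prop :=
  (∀ t : Fin r, β t = 1 - α → σ (Fin.last r) * σ t.castSucc ≠ σ 0 * σ t.succ) ∧
  ((∀ i : Fin r, β i ≠ 1 - α) → σ (Fin.last r) ≠ σ 0)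

/-! ### Codings -/

/-- The letter read by the rotation with marked points at time `i`. -/
def rotCode {r : ℕ} (α : ℝ) (β : Fin r → ℝ) (x : AddCircle (1 : ℝ)) (i : ℕ) : Fin (r + 1) :=
  atomIdx β (circleRepr ((rotMap α)^[i] x))

/-- The language `L'` of the rotation with marked points `β_1, …, β_r`. -/
def LRot {r : ℕ} (α : ℝ) (β : Fin r → ℝ) : Set (List (Fin (r + 1))) :=
  {w | ∃ x : AddCircle (1 : ℝ), ∀ i : Fin w.length, w.get i = rotCode α β x i.1}

/-- The letter of the natural coding of `T` at a point. -/
def vsCode {r d : ℕ} (β : Fin r → ℝ) (p : AddCircle (1 : ℝ) × Fin d) : Fin (r + 1) × Fin d :=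
  (atomIdx β (circleRepr p.1), p.2)

/-- The language `L(T)` of the natural coding of the generalized Veech–Sataev system. -/
def LVST {r d : ℕ} (α : ℝ) (β : Fin r → ℝ) (σ : Fin (r + 1) → Equiv.Perm (Fin d)) :
    Set (List (Fin (r + 1) × Fin d)) :=
  {w | ∃ p : AddCircle (1 : ℝ) × Fin d,
    ∀ i : Fin w.length, w.get i = vsCode β ((VST α β σ)^[i.1] p)}

/-- Bounded runs: there is a bound on the number of consecutive integers satisfying `P`. -/
def BoundedRun (P : ℕ → Prop) : Prop :=
  ∃ B : ℕ, ∀ m : ℕ, ∃ n : ℕ, m ≤ n ∧ n ≤ m + B ∧ ¬ P n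

end

noncomputable section VSProof

abbrev Circ := AddCircle (1 : ℝ)

/-- The jump set `[β, β + 1/2)`. -/
def jumpSet (β : ℝ) : Set Circ := {x | β ≤ circleRepr x ∧ circleRepr x < β + 1 / 2}

/-- The indicator of the jump set, with values in `Fin 2`. -/
def jump (β : ℝ) (x : Circ) : Fin 2 := if x ∈ jumpSet β then 1 else 0

/-- The skew product, in additive form. -/
def skew (α β : ℝ) (p : Circ × Fin 2) : Circ × Fin 2 := (p.1 + (α : Circ), p.2 + jump β p.1)

/-- The concrete system. -/
abbrev VT (α β : ℝ) : Circ × Fin 2 → Circ × Fin 2 :=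
  VST α ![β, β + 1 / 2] ![(1 : Equiv.Perm (Fin 2)), Equiv.swap 0 1, 1]

lemma circleRepr_coe (x : ℝ) : circleRepr (x : Circ) = Int.fract x := by
  have := AddCircle.coe_equivIco_mk_apply (p := (1 : ℝ)) x
  simpa [circleRepr] using this

lemma circleRepr_mem (x : Circ) : 0 ≤ circleRepr x ∧ circleRepr x < 1 := by
  have := (AddCircle.equivIco (1 : ℝ) 0 x).2
  simpa [circleRepr] using this

lemma coe_circleRepr (x : Circ) : ((circleRepr x : ℝ) : Circ) = x := by
  simp [circleRepr]

lemma atomIdx_two (β x : ℝ) : (atomIdx ![β, β + 1 / 2] x).1 =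
    (if β ≤ x then 1 else 0) + (if β + 1 / 2 ≤ x then 1 else 0) := by
  unfold atomIdx
  simp only [Finset.card_filter, Fin.sum_univ_two]
  simp

lemma atomIdx_eq_zero (β x : ℝ) : atomIdx ![β, β + 1 / 2] x = 0 ↔ x < β := by
  rw [Fin.ext_iff, atomIdx_two]
  split_ifs with h1 h2 <;> simp <;> linarith

lemma sigma_eq (β x : ℝ) : sigmaOf ![β, β + 1 / 2]
    ![(1 : Equiv.Perm (Fin 2)), Equiv.swap 0 1, 1] x =
    if β ≤ x ∧ x < β + 1 / 2 then Equiv.swap 0 1 else 1 := by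
  unfold sigmaOf
  have h := atomIdx_two β x
  set a := atomIdx ![β, β + 1 / 2] x with ha
  by_cases h1 : β ≤ x
  · by_cases h2 : β + 1 / 2 ≤ x
    · have : a = 2 := by rw [Fin.ext_iff, h, if_pos h1, if_pos h2]; rfl
      rw [this, if_neg (by intro h; linarith [h.2])]; rfl
    · have : a = 1 := by rw [Fin.ext_iff, h]; simp [h1]; linarith
      rw [this, if_pos ⟨h1, by linarith⟩]; rfl
  · have : a = 0 := by rw [ha, atomIdx_eq_zero]; linarith
    rw [this, if_neg (by tauto)]; rfl

lemma VT_eq (α β : ℝ) : VT α β = skew α β := by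
  funext ⟨x, s⟩
  simp only [VT, VST, skew, rotMap, sigma_eq]
  by_cases h : β ≤ circleRepr x ∧ circleRepr x < β + 1 / 2
  · rw [if_pos h, jump, if_pos (show x ∈ jumpSet β from h)]
    refine Prod.ext rfl ?_
    fin_cases s <;> rfl
  · rw [if_neg h, jump, if_neg (show x ∉ jumpSet β from h)]
    simp

lemma mem_jumpSet {β : ℝ} (h0 : 0 < β) (h1 : β < 1 / 2) (x : ℝ) :
    (x : Circ) ∈ jumpSet β ↔ Even ⌊2 * (x - β)⌋ := by
  have hx : (2 * (x - β)) = 2 * (Int.fract x - β) + ((2 * ⌊x⌋ : ℤ) : ℝ) := by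
    push_cast; linarith [Int.fract_add_floor x]
  rw [hx, Int.floor_add_intCast, Int.even_add]
  simp only [jumpSet, mem_ofPred_eq, circleRepr_coe, even_two, Even.mul_right, iff_true]
  have hr0 := Int.fract_nonneg x
  have hr1 := Int.fract_lt_one x
  set r := Int.fract x
  constructor
  · rintro ⟨a, b⟩
    have : ⌊2 * (r - β)⌋ = 0 := by rw [Int.floor_eq_iff]; constructor <;> push_cast <;> linarith
    rw [this]; exact Even.zero
  · intro he
    by_contra hc
    rcases lt_or_ge r β with h | h
    · have : ⌊2 * (r - β)⌋ = -1 := by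
        rw [Int.floor_eq_iff]; constructor <;> push_cast <;> linarith
      rw [this] at he; revert he; decide
    · have h' : β + 1 / 2 ≤ r := by by_contra h2; exact hc ⟨h, by linarith⟩
      have : ⌊2 * (r - β)⌋ = 1 := by
        rw [Int.floor_eq_iff]; constructor <;> push_cast <;> linarith
      rw [this] at he; revert he; decide

lemma measurable_circleRepr : Measurable circleRepr := by
  have : circleRepr = fun x => ((AddCircle.measurableEquivIco (1 : ℝ) 0) x : ℝ) := rfl
  rw [this]
  exact measurable_subtype_coe.comp (MeasurableEquiv.measurable _)

lemma measurableSet_jumpSet (β : ℝ) : MeasurableSet (jumpSet β) :=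
  (measurableSet_le measurable_const measurable_circleRepr).inter
    (measurableSet_lt measurable_circleRepr measurable_const)

lemma measurable_jump (β : ℝ) : Measurable (jump β) :=
  Measurable.ite (measurableSet_jumpSet β) measurable_const measurable_const

lemma measurable_skew (α β : ℝ) : Measurable (skew α β) :=
  (measurable_fst.add_const _).prodMk
    ((measurable_of_countable (fun p : Fin 2 × Fin 2 => p.1 + p.2)).comp
      (measurable_snd.prodMk ((measurable_jump β).comp measurable_fst)))

lemma skew_iterate (α β : ℝ) (n : ℕ) (x : Circ) (s : Fin 2) :
    (skew α β)^[n] (x, s) =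
      (x + n • (α : Circ), s + ∑ i ∈ Finset.range n, jump β (x + i • (α : Circ))) := by
  induction n with
  | zero => simp
  | succ n ih =>
    rw [Function.iterate_succ_apply', ih, skew, Finset.sum_range_succ, succ_nsmul]
    simp only [add_assoc]

/-- jump and half-translation -/
lemma jump_half {β : ℝ} (h0 : 0 < β) (h1 : β < 1 / 2) (x : Circ) :
    x + ((1 / 2 : ℝ) : Circ) ∈ jumpSet β ↔ x ∉ jumpSet β := by
  rw [← coe_circleRepr x, ← AddCircle.coe_add, mem_jumpSet h0 h1, mem_jumpSet h0 h1]
  have : 2 * (circleRepr x + 1 / 2 - β) = 2 * (circleRepr x - β) + 1 := by ring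
  rw [this, Int.floor_add_one, Int.even_add_one]

/-- The uniform probability on `Fin 2`. -/
def unif2 : Measure (Fin 2) := (2⁻¹ : ℝ≥0∞) • Measure.count

instance : IsProbabilityMeasure unif2 := ⟨by
  simp [unif2, Measure.count_apply]
  exact ENNReal.inv_mul_cancel (by simp) (by simp)⟩

/-- The invariant measure. -/
def muT : Measure (Circ × Fin 2) := (volume : Measure Circ).prod unif2

instance : IsProbabilityMeasure (volume : Measure Circ) := ⟨by
  simp [AddCircle.measure_univ]⟩

instance : IsProbabilityMeasure muT := by unfold muT; infer_instance

lemma unif2_singleton (s : Fin 2) : unif2 {s} = 2⁻¹ := by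
  simp [unif2]

lemma muT_prod_singleton (S : Set Circ) (s : Fin 2) : muT (S ×ˢ {s}) = volume S * 2⁻¹ := by
  rw [muT, Measure.prod_prod, unif2_singleton]

lemma map_unif2 (t : Fin 2) : Measure.map (fun s => s + t) unif2 = unif2 := by
  refine Measure.ext_of_singleton fun s => ?_
  rw [Measure.map_apply (measurable_of_countable _) (measurableSet_singleton _)]
  have : (fun s : Fin 2 => s + t) ⁻¹' {s} = {s - t} := by
    ext u; simp only [mem_preimage, mem_singleton_iff, eq_sub_iff_add_eq]
  rw [this, unif2_singleton, unif2_singleton]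

lemma skew_mp (α β : ℝ) : MeasurePreserving (skew α β) muT muT := by
  refine MeasurePreserving.skew_product (μa := (volume : Measure Circ))
    (f := fun x : Circ => x + (α : Circ)) (g := fun x s => s + jump β x)
    (measurePreserving_add_right _ _) ?_ (ae_of_all _ fun x => map_unif2 _)
  exact (measurable_skew α β).snd

lemma ergodic_rot {α : ℝ} (hα : Irrational α) : Ergodic (fun x : Circ => x + (α : Circ)) := by
  rw [AddCircle.ergodic_add_right, ← AddCircle.denseRange_zsmul_iff,
    AddCircle.denseRange_zsmul_coe_iff]
  simpa using hα

lemma rot_unique {α : ℝ} (hα : Irrational α) (m : Measure Circ) [IsProbabilityMeasure m]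
    (hm : MeasurePreserving (fun x : Circ => x + (α : Circ)) m m) : m = volume := by
  have hz : ∀ n : ℤ, MeasurePreserving (fun x : Circ => x + n • (α : Circ)) m m := by
    have hn : ∀ n : ℕ, MeasurePreserving (fun x : Circ => x + n • (α : Circ)) m m := by
      intro n
      have := hm.iterate n
      rwa [add_right_iterate] at this
    intro n
    obtain ⟨k, rfl | rfl⟩ := n.eq_nat_or_neg
    · simpa using hn k
    · have := (MeasurePreserving.symm (MeasurableEquiv.addRight (k • (α : Circ))) (hn k))
      convert this using 1
      funext x
      simp
      
  have hd : DenseRange (· • (α : Circ) : ℤ → Circ) := by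
    rw [AddCircle.denseRange_zsmul_coe_iff]; simpa using hα
  have key : ∀ g : Circ, Measure.map (fun x => x + g) m = m := by
    intro g
    have : IsProbabilityMeasure (Measure.map (fun x => x + g) m) :=
      Measure.isProbabilityMeasure_map (by fun_prop)
    refine ext_of_forall_integral_eq_of_IsFiniteMeasure fun f => ?_
    rw [integral_map (by fun_prop) f.continuous.aestronglyMeasurable]
    have hc : Continuous fun g : Circ => ∫ x, f (x + g) ∂m := by
      refine continuous_of_dominated (bound := fun _ => ‖f‖) ?_ ?_ ?_ ?_
      · intro g
        exact (f.continuous.comp (continuous_add_const g)).aestronglyMeasurable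
      · intro g; exact ae_of_all _ fun x => f.norm_coe_le_norm _
      · exact integrable_const _
      · exact ae_of_all _ fun x => f.continuous.comp (continuous_const_add x)
    have := hc.ext_on hd (continuous_const (y := ∫ x, f x ∂m)) (by
      rintro _ ⟨n, rfl⟩
      have h := (hz n).map_eq
      conv_rhs => rw [← h]
      rw [integral_map (by fun_prop) f.continuous.aestronglyMeasurable])
    exact congrFun this g
  have : m.IsAddLeftInvariant := ⟨fun g => by
    have := key g
    simpa [add_comm] using this⟩
  have h := Measure.isAddLeftInvariant_eq_smul m (volume : Measure Circ)
  have h1 := congrArg (fun μ => μ univ) h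
  simp only [Measure.smul_apply, measure_univ] at h1
  rw [h]
  set c := Measure.addHaarScalarFactor m (volume : Measure Circ)
  have : c = 1 := by
    have h2 : (1 : ℝ≥0∞) = (c : ℝ≥0∞) * 1 := h1
    rw [mul_one] at h2
    exact_mod_cast h2.symm
  rw [this, one_smul]

lemma jump_eq_one_of_mem {β : ℝ} {x : Circ} (h : x ∈ jumpSet β) : jump β x = 1 := if_pos h
lemma jump_eq_zero_of_not_mem {β : ℝ} {x : Circ} (h : x ∉ jumpSet β) : jump β x = 0 := if_neg h

set_option maxHeartbeats 1000000 in
lemma skew_ergodic {α β : ℝ} (hα : Irrational α) (h0 : 0 < β) (h1 : β < 1 / 2) :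
    Ergodic (skew α β) muT := by
  refine ⟨skew_mp α β, ⟨fun A hA hinv => ?_⟩⟩
  have hs : ∀ x s, (x + (α : Circ), s + jump β x) ∈ A ↔ (x, s) ∈ A := by
    intro x s
    have : (x, s) ∈ skew α β ⁻¹' A ↔ (x, s) ∈ A := by rw [hinv]
    exact this
  have m0 : MeasurableSet {x : Circ | (x, (0 : Fin 2)) ∈ A} :=
    measurable_prodMk_right hA
  have m1 : MeasurableSet {x : Circ | (x, (1 : Fin 2)) ∈ A} :=
    measurable_prodMk_right hA
  -- action on the two fibres
  have hin : ∀ x, x ∈ jumpSet β → (((x + (α : Circ), (0 : Fin 2)) ∈ A ↔ (x, (1 : Fin 2)) ∈ A) ∧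
      ((x + (α : Circ), (1 : Fin 2)) ∈ A ↔ (x, (0 : Fin 2)) ∈ A)) := by
    intro x hx
    have a := hs x 0
    have b := hs x 1
    rw [jump_eq_one_of_mem hx] at a b
    exact ⟨b, a⟩
  have hout : ∀ x, x ∉ jumpSet β → (((x + (α : Circ), (0 : Fin 2)) ∈ A ↔ (x, (0 : Fin 2)) ∈ A) ∧
      ((x + (α : Circ), (1 : Fin 2)) ∈ A ↔ (x, (1 : Fin 2)) ∈ A)) := by
    intro x hx
    have a := hs x 0
    have b := hs x 1
    rw [jump_eq_zero_of_not_mem hx] at a b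
    exact ⟨a, b⟩
  have hR := ergodic_rot hα
  have hsub : ∀ S : Set Circ, MeasurableSet S → (∀ x, x + (α : Circ) ∈ S ↔ x ∈ S) →
      volume S = 0 ∨ volume Sᶜ = 0 := by
    intro S hS h
    rcases hR.toPreErgodic.ae_empty_or_univ hS (by ext x; exact h x) with h | h
    · left; simpa using ae_eq_empty.1 h
    · right; exact ae_eq_univ.1 h
  have null_of : ∀ B : Set (Circ × Fin 2), ∀ S : Set Circ, volume S = 0 →
      (∀ x s, (x, s) ∈ B → x ∈ S) → muT B = 0 := by
    intro B S hS h
    refine measure_mono_null (t := S ×ˢ univ) (fun p hp => ⟨h p.1 p.2 hp, trivial⟩) ?_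
    rw [muT, Measure.prod_prod, hS, zero_mul]
  have f2 : ∀ s : Fin 2, s = 0 ∨ s = 1 := by decide
  rw [eventuallyConst_set']
  set E : Set Circ := {x | (x, (0 : Fin 2)) ∈ A} ∪ {x | (x, (1 : Fin 2)) ∈ A} with hE
  set B : Set Circ := {x | (x, (0 : Fin 2)) ∈ A} ∩ {x | (x, (1 : Fin 2)) ∈ A} with hB
  have hEi : ∀ x, x + (α : Circ) ∈ E ↔ x ∈ E := by
    intro x
    by_cases hx : x ∈ jumpSet β
    · have := hin x hx
      simp only [hE, mem_union, mem_ofPred_eq]; tauto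
    · have := hout x hx
      simp only [hE, mem_union, mem_ofPred_eq]; tauto
  have hBi : ∀ x, x + (α : Circ) ∈ B ↔ x ∈ B := by
    intro x
    by_cases hx : x ∈ jumpSet β
    · have := hin x hx
      simp only [hB, mem_inter_iff, mem_ofPred_eq]; tauto
    · have := hout x hx
      simp only [hB, mem_inter_iff, mem_ofPred_eq]; tauto
  rcases hsub E (m0.union m1) hEi with hE0 | hE1
  · left
    rw [ae_eq_empty]
    refine null_of A E hE0 fun x s h => ?_
    rcases f2 s with rfl | rfl
    · left; exact h
    · right; exact h
  rcases hsub B (m0.inter m1) hBi with hB0 | hB1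
  swap
  · right
    rw [ae_eq_univ]
    refine null_of Aᶜ Bᶜ hB1 fun x s h hx => h ?_
    rcases f2 s with rfl | rfl
    · exact hx.1
    · exact hx.2
  exfalso
  set D : Set Circ := E \ B with hD
  have hDm : MeasurableSet D := (m0.union m1).diff (m0.inter m1)
  have hDi : ∀ x, x + (α : Circ) ∈ D ↔ x ∈ D := fun x => and_congr (hEi x) (not_congr (hBi x))
  have hDc : volume Dᶜ = 0 := by
    refine measure_mono_null (t := Eᶜ ∪ B) ?_ (measure_union_null hE1 hB0)
    intro x hx
    by_contra h
    simp only [mem_union, mem_compl_iff, not_or, not_not] at h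
    exact hx h
  set G : Set Circ := {x | (x, (0 : Fin 2)) ∈ A} with hG
  have hGD : ∀ x ∈ D, (x + (α : Circ) ∈ G ↔ (x ∈ G ↔ x ∉ jumpSet β)) := by
    intro x hx
    have hx' : ((x, (0 : Fin 2)) ∈ A ∨ (x, (1 : Fin 2)) ∈ A) ∧
      ¬ ((x, (0 : Fin 2)) ∈ A ∧ (x, (1 : Fin 2)) ∈ A) := hx
    by_cases hj : x ∈ jumpSet β
    · have := hin x hj
      simp only [hG, mem_ofPred_eq]; tauto
    · have := hout x hj
      simp only [hG, mem_ofPred_eq]; tauto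
  set h : Circ := ((1 / 2 : ℝ) : Circ) with hh
  set D' : Set Circ := {x | x + h ∈ D} with hD'
  have hD'm : MeasurableSet D' := (measurable_add_const h) hDm
  have hD'c : volume D'ᶜ = 0 := by
    have := (measurePreserving_add_right (volume : Measure Circ) h).measure_preimage
      hDm.compl.nullMeasurableSet
    rw [hDc] at this
    exact this
  have hD'i : ∀ x, x + (α : Circ) ∈ D' ↔ x ∈ D' := by
    intro x
    have := hDi (x + h)
    rwa [add_right_comm] at this
  set H : Set Circ := {x | x ∈ D ∧ x ∈ D' ∧ (x ∈ G ↔ x + h ∈ G)} with hH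
  set H' : Set Circ := {x | x ∈ D ∧ x ∈ D' ∧ ¬ (x ∈ G ↔ x + h ∈ G)} with hH'
  have hGm' : MeasurableSet {x | x + h ∈ G} := (measurable_add_const h) m0
  have hHeq : H = (D ∩ D') ∩ ((G ∩ {x | x + h ∈ G}) ∪ (Gᶜ ∩ {x | x + h ∈ G}ᶜ)) := by
    ext x
    simp only [hH, mem_ofPred_eq, mem_inter_iff, mem_union, mem_compl_iff]
    tauto
  have hHm : MeasurableSet H := by
    rw [hHeq]
    exact (hDm.inter hD'm).inter ((m0.inter hGm').union (m0.compl.inter hGm'.compl))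
  have flip : ∀ x, x ∈ D → x ∈ D' → ((x + (α : Circ) ∈ G ↔ x + (α : Circ) + h ∈ G) ↔
      ¬ (x ∈ G ↔ x + h ∈ G)) := by
    intro x hx hx'
    have a := hGD x hx
    have b := hGD (x + h) hx'
    have c := jump_half h0 h1 x
    rw [add_right_comm] at b
    rw [a, b, c]
    clear_value H H' G D D'
    by_cases p : x ∈ G <;> by_cases q : x + h ∈ G <;> by_cases r : x ∈ jumpSet β <;> simp [p, q, r]
  have r1 : (fun x : Circ => x + (α : Circ)) ⁻¹' H = H' := by
    ext x
    simp only [hH, hH', mem_preimage, mem_ofPred_eq, hDi, hD'i]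
    constructor
    · rintro ⟨a, b, c⟩; exact ⟨a, b, (flip x a b).1 c⟩
    · rintro ⟨a, b, c⟩; exact ⟨a, b, (flip x a b).2 c⟩
  have r2 : (fun x : Circ => x + (α : Circ)) ⁻¹' H' = H := by
    ext x
    simp only [hH, hH', mem_preimage, mem_ofPred_eq, hDi, hD'i]
    constructor
    · rintro ⟨a, b, c⟩; refine ⟨a, b, ?_⟩; have := flip x a b; tauto
    · rintro ⟨a, b, c⟩; refine ⟨a, b, ?_⟩; have := flip x a b; tauto
  have r3 : (fun x : Circ => x + ((2 * α : ℝ) : Circ)) ⁻¹' H = H := by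
    conv_rhs => rw [← r2, ← r1]
    ext x
    simp only [mem_preimage]
    have : x + ((2 * α : ℝ) : Circ) = x + (α : Circ) + (α : Circ) := by
      rw [add_assoc, ← AddCircle.coe_add, two_mul]
    rw [this]
  have hvol : volume H' = volume H := by
    rw [← r1]
    exact (measurePreserving_add_right (volume : Measure Circ) _).measure_preimage
      hHm.nullMeasurableSet
  have hcov : volume (H ∪ H')ᶜ = 0 := by
    refine measure_mono_null (t := Dᶜ ∪ D'ᶜ) ?_ (measure_union_null hDc hD'c)
    intro x hx
    by_contra hc
    simp only [mem_union, mem_compl_iff, not_or, not_not] at hc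
    apply hx
    by_cases hg : (x ∈ G ↔ x + h ∈ G)
    · left; exact ⟨hc.1, hc.2, hg⟩
    · right; exact ⟨hc.1, hc.2, hg⟩
  have hR2 := ergodic_rot (α := 2 * α) (by exact_mod_cast hα.natCast_mul (m := 2) (by norm_num))
  rcases hR2.toPreErgodic.ae_empty_or_univ hHm r3 with hz | hz
  · rw [ae_eq_empty] at hz
    have : volume (H ∪ H') = 0 := measure_union_null hz (hvol.trans hz)
    have h2 : volume (univ : Set Circ) = 0 := by
      rw [← union_compl_self (H ∪ H')]
      exact measure_union_null this hcov
    simp at h2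
  · rw [ae_eq_univ] at hz
    have : H' ⊆ Hᶜ := fun x hx hx' => hx.2.2 hx'.2.2
    have h3 : volume H' = 0 := measure_mono_null this hz
    have h2 : volume (univ : Set Circ) = 0 := by
      rw [← union_compl_self H]
      exact measure_union_null (hvol ▸ h3) hz
    simp at h2

lemma skew_unique {α β : ℝ} (hα : Irrational α) (h0 : 0 < β) (h1 : β < 1 / 2)
    (ν : Measure (Circ × Fin 2)) [IsProbabilityMeasure ν]
    (hν : MeasurePreserving (skew α β) ν ν) : ν = muT := by
  refine (skew_ergodic hα h0 h1).eq_of_absolutelyContinuous hν ?_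
  have : IsProbabilityMeasure (Measure.map Prod.fst ν) :=
    Measure.isProbabilityMeasure_map (by fun_prop)
  have hm : Measure.map Prod.fst ν = (volume : Measure Circ) := by
    refine rot_unique hα _ ⟨by fun_prop, ?_⟩
    rw [Measure.map_map (by fun_prop) (by fun_prop)]
    have : (fun x : Circ => x + (α : Circ)) ∘ (Prod.fst : Circ × Fin 2 → Circ)
        = Prod.fst ∘ skew α β := rfl
    rw [this, ← Measure.map_map (by fun_prop) (measurable_skew α β), hν.map_eq]
  refine Measure.AbsolutelyContinuous.mk fun S hS hS0 => ?_
  have hsec : ∀ s : Fin 2, volume {x : Circ | (x, s) ∈ S} = 0 := by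
    intro s
    have hle : muT ({x : Circ | (x, s) ∈ S} ×ˢ {s}) = 0 := by
      refine measure_mono_null ?_ hS0
      rintro ⟨x, t⟩ ⟨hx, ht⟩
      have ht' : t = s := ht
      rw [ht']; exact hx
    rw [muT_prod_singleton] at hle
    rcases mul_eq_zero.1 hle with h | h
    · exact h
    · simp at h
  have hU : MeasurableSet (⋃ s : Fin 2, {x : Circ | (x, s) ∈ S}) :=
    MeasurableSet.iUnion fun s => measurable_prodMk_right hS
  refine measure_mono_null (t := Prod.fst ⁻¹' (⋃ s : Fin 2, {x : Circ | (x, s) ∈ S})) ?_ ?_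
  · rintro ⟨x, s⟩ hx
    exact mem_iUnion.2 ⟨s, hx⟩
  · rw [← Measure.map_apply measurable_fst hU, hm]
    exact measure_iUnion_null hsec

lemma sqrt_two_bad {n m : ℤ} (hn : n ≠ 0) {N : ℝ} (hN : 1 ≤ N) (hnN : |(n : ℝ)| ≤ N) :
    1 / (4 * N) ≤ |(n : ℝ) * √2 - m| := by
  by_contra hlt
  push Not at hlt
  have h2 : √2 * √2 = 2 := Real.mul_self_sqrt (by norm_num)
  have hs : √2 < 1.5 := by
    rw [Real.sqrt_lt' (by norm_num)]; norm_num
  have hs0 : 0 ≤ √2 := Real.sqrt_nonneg 2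
  have hne : (2 * n ^ 2 - m ^ 2 : ℤ) ≠ 0 := by
    intro h
    have h' : (2 * (n : ℝ) ^ 2 - (m : ℝ) ^ 2) = 0 := by exact_mod_cast h
    have hr : (√2 : ℝ) * |(n : ℝ)| = |(m : ℝ)| := by
      have : (√2 * |(n : ℝ)|) ^ 2 = |(m : ℝ)| ^ 2 := by
        rw [mul_pow, sq_abs, sq_abs, sq √2, h2]; linarith
      exact (pow_left_inj₀ (by positivity) (by positivity) (by norm_num)).1 this
    have hirr := irrational_sqrt_two.mul_intCast (m := |n|) (by simpa using hn)
    apply hirr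
    exact ⟨(|m| : ℤ), by push_cast; linarith⟩
  have h1 : (1 : ℝ) ≤ |((2 * n ^ 2 - m ^ 2 : ℤ) : ℝ)| := by
    have := Int.one_le_abs hne
    exact_mod_cast this
  have h3 : ((2 * n ^ 2 - m ^ 2 : ℤ) : ℝ) = ((n : ℝ) * √2 - m) * ((n : ℝ) * √2 + m) := by
    push_cast
    linear_combination (-(n : ℝ) ^ 2) * h2
  rw [h3, abs_mul] at h1
  have hq : 1 / (4 * N) ≤ 1 / 4 := by
    apply one_div_le_one_div_of_le <;> linarith
  have h4 : |(n : ℝ) * √2 + m| ≤ 4 * N := by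
    have : (n : ℝ) * √2 + m = 2 * (n * √2) - (n * √2 - m) := by ring
    rw [this]
    refine (abs_sub _ _).trans ?_
    rw [abs_mul, abs_mul, abs_two, abs_of_nonneg hs0]
    nlinarith [abs_nonneg (n : ℝ)]
  have h5 : |(n : ℝ) * √2 - m| * |(n : ℝ) * √2 + m| < 1 / (4 * N) * (4 * N) := by
    have hp : 0 < 4 * N := by linarith
    calc _ ≤ |(n : ℝ) * √2 - m| * (4 * N) := mul_le_mul_of_nonneg_left h4 (abs_nonneg _)
      _ < _ := mul_lt_mul_of_pos_right hlt hp
  rw [one_div_mul_cancel (by linarith)] at h5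
  linarith

/-- Points where the jump function changes under translation by `t`. -/
def changeSet (β t : ℝ) : Set Circ := {y | jump β y + jump β (y + (t : Circ)) = 1}

lemma fin2_not_one {s : Fin 2} (h : s ≠ 1) : s = 0 := by omega

lemma measurableSet_changeSet (β t : ℝ) : MeasurableSet (changeSet β t) := by
  have h1 := measurable_jump β
  have h2 : Measurable fun y : Circ => jump β (y + (t : Circ)) := h1.comp (measurable_add_const _)
  have : Measurable fun y : Circ => jump β y + jump β (y + (t : Circ)) :=
    (measurable_of_countable (fun p : Fin 2 × Fin 2 => p.1 + p.2)).comp (h1.prodMk h2)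
  exact this (measurableSet_singleton 1)

lemma change_fract {β t : ℝ} (h0 : 0 < β) (h1 : β < 1 / 2) (ht : 0 < t) (x : ℝ)
    (hx : (x : Circ) ∈ changeSet β t) : 1 - 2 * t ≤ Int.fract (2 * (x - β)) := by
  by_contra hlt
  push Not at hlt
  have hfl : ⌊2 * (x + t - β)⌋ = ⌊2 * (x - β)⌋ := by
    rw [Int.floor_eq_iff]
    have := Int.fract_add_floor (2 * (x - β))
    have := Int.fract_nonneg (2 * (x - β))
    constructor <;> linarith
  have hiff : (x : Circ) + (t : Circ) ∈ jumpSet β ↔ (x : Circ) ∈ jumpSet β := by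
    rw [← AddCircle.coe_add, mem_jumpSet h0 h1, mem_jumpSet h0 h1, hfl]
  have : jump β x + jump β (x + (t : Circ)) = 1 := hx
  unfold jump at this
  by_cases h : (x : Circ) ∈ jumpSet β
  · rw [if_pos h, if_pos (hiff.2 h)] at this; revert this; decide
  · rw [if_neg h, if_neg (fun h' => h (hiff.1 h'))] at this; revert this; decide

lemma change_volume {β t : ℝ} (h0 : 0 < β) (h1 : β < 1 / 2) (ht : 0 < t) (ht' : t < 1 / 4) :
    ENNReal.ofReal (t / 2) ≤ volume (changeSet β t) := by
  have hb : Metric.closedBall ((β - t / 2 : ℝ) : Circ) (t / 4) ⊆ changeSet β t := by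
    intro y hy
    rw [Metric.mem_closedBall, dist_eq_norm] at hy
    obtain ⟨u, hu⟩ : ∃ u : ℝ, (u : Circ) = y - ((β - t / 2 : ℝ) : Circ) :=
      ⟨_, coe_circleRepr _⟩
    rw [← hu, UnitAddCircle.norm_eq] at hy
    have hcoe : ((u - round u : ℝ) : Circ) = (u : Circ) := by
      rw [AddCircle.coe_sub, sub_eq_self, AddCircle.coe_eq_zero_iff]
      exact ⟨round u, by simp⟩
    set e := u - round u
    have hy' : y = ((β - t / 2 + e : ℝ) : Circ) := by
      rw [AddCircle.coe_add, hcoe, hu]; abel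
    have he := abs_le.1 hy
    have hnot : y ∉ jumpSet β := by
      rw [hy', mem_jumpSet h0 h1]
      have : ⌊2 * (β - t / 2 + e - β)⌋ = -1 := by
        rw [Int.floor_eq_iff]; constructor <;> push_cast <;> linarith
      rw [this]; decide
    have hin : y + (t : Circ) ∈ jumpSet β := by
      rw [hy', ← AddCircle.coe_add, mem_jumpSet h0 h1]
      have : ⌊2 * (β - t / 2 + e + t - β)⌋ = 0 := by
        rw [Int.floor_eq_iff]; constructor <;> push_cast <;> linarith
      rw [this]; decide
    change jump β y + jump β (y + (t : Circ)) = 1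
    rw [jump_eq_one_of_mem hin, jump_eq_zero_of_not_mem hnot]; rfl
  refine le_trans ?_ (measure_mono hb)
  rw [AddCircle.volume_closedBall, min_eq_right (by linarith)]
  exact ENNReal.ofReal_le_ofReal (by linarith)

/-- The Birkhoff sums of the jump function. -/
def bsum (α β : ℝ) (q : ℕ) (x : Circ) : Fin 2 :=
  ∑ i ∈ Finset.range q, jump β (x + i • (α : Circ))

lemma measurable_bsum (α β : ℝ) (q : ℕ) : Measurable (bsum α β q) := by
  have h : Measurable fun x : Circ => ((skew α β)^[q] (x, 0)).2 :=
    (((measurable_skew α β).iterate q).comp (measurable_id.prodMk measurable_const)).snd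
  have : (fun x : Circ => ((skew α β)^[q] (x, 0)).2) = bsum α β q := by
    funext x; rw [skew_iterate]; simp [bsum]
  rwa [this] at h

lemma bsum_volume {β : ℝ} (h0 : 0 < β) (h1 : β < 1 / 2) {q : ℕ} (hq : 1 ≤ q) :
    ENNReal.ofReal (1 / 64) ≤ volume {x | bsum (√2 - 1) β q x = 1} := by
  set α : ℝ := √2 - 1 with hα
  have hq' : (1 : ℝ) ≤ q := by exact_mod_cast hq
  set t : ℝ := 1 / (16 * q) with ht
  have ht0 : 0 < t := by positivity
  have ht1 : t ≤ 1 / 16 := by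
    rw [ht]; apply one_div_le_one_div_of_le <;> linarith
  set V := changeSet β t with hV
  set E : Set Circ := {x | bsum α β q x = 1} with hE
  have hEm : MeasurableSet E := measurable_bsum α β q (measurableSet_singleton 1)
  -- at most one index
  have huniq : ∀ x : Circ, ∀ i < q, ∀ j < q, x + i • (α : Circ) ∈ V → x + j • (α : Circ) ∈ V →
      i = j := by
    intro x i hi j hj hxi hxj
    by_contra hij
    have lift : ∀ k : ℕ, x + k • (α : Circ) = ((circleRepr x + k * α : ℝ) : Circ) := by
      intro k
      rw [AddCircle.coe_add, coe_circleRepr, ← nsmul_eq_mul, AddCircle.coe_nsmul]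
    rw [lift] at hxi hxj
    have fi := change_fract h0 h1 ht0 _ hxi
    have fj := change_fract h0 h1 ht0 _ hxj
    set zi := 2 * (circleRepr x + i * α - β) with hzi
    set zj := 2 * (circleRepr x + j * α - β) with hzj
    have e1 := Int.fract_add_floor zi
    have e2 := Int.fract_add_floor zj
    have l1 := Int.fract_lt_one zi
    have l2 := Int.fract_lt_one zj
    have hn : (2 * ((i : ℤ) - j) : ℤ) ≠ 0 := by omega
    have hbad := sqrt_two_bad (n := 2 * ((i : ℤ) - j))
      (m := 2 * ((i : ℤ) - j) + (⌊zi⌋ - ⌊zj⌋)) hn (N := 2 * q) (by linarith) (by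
        have : |(2 * ((i : ℤ) - j) : ℤ)| ≤ 2 * q := by rw [abs_le]; constructor <;> omega
        exact_mod_cast this)
    have heq : ((2 * ((i : ℤ) - j) : ℤ) : ℝ) * √2 -
        ((2 * ((i : ℤ) - j) + (⌊zi⌋ - ⌊zj⌋) : ℤ) : ℝ) = Int.fract zi - Int.fract zj := by
      push_cast
      have : Int.fract zi - Int.fract zj = zi - zj - (⌊zi⌋ - ⌊zj⌋) := by linarith
      rw [this, hzi, hzj, hα]; ring
    rw [heq] at hbad
    have h2t : 1 / (4 * (2 * (q : ℝ))) = 2 * t := by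
      rw [ht]; field_simp; norm_num
    rw [h2t] at hbad
    have : |Int.fract zi - Int.fract zj| < 2 * t := by
      rw [abs_lt]; constructor <;> linarith
    linarith
  set W : ℕ → Set Circ := fun i => {x | x + i • (α : Circ) ∈ V} with hW
  have hWm : ∀ i, MeasurableSet (W i) := fun i =>
    (measurable_add_const _) (measurableSet_changeSet β t)
  have hWv : ∀ i, volume (W i) = volume V := fun i =>
    (measurePreserving_add_right (volume : Measure Circ) (i • (α : Circ))).measure_preimage
      (measurableSet_changeSet β t).nullMeasurableSet
  have hUv : volume (⋃ i ∈ Finset.range q, W i) = q * volume V := by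
    rw [measure_biUnion_finset]
    · simp [hWv]
    · intro i hi j hj hij
      refine Set.disjoint_left.2 fun x hx hx' => hij ?_
      exact huniq x i (by simpa using hi) j (by simpa using hj) hx hx'
    · intro i _; exact hWm i
  have hsub : (⋃ i ∈ Finset.range q, W i) ⊆ E ∪ (fun x => x + (t : Circ)) ⁻¹' E := by
    intro x hx
    simp only [mem_iUnion, Finset.mem_range] at hx
    obtain ⟨i, hi, hxi⟩ := hx
    have hs : bsum α β q x + bsum α β q (x + (t : Circ)) = 1 := by
      unfold bsum
      rw [← Finset.sum_add_distrib, Finset.sum_eq_single i]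
      · rw [add_right_comm x]; exact hxi
      · intro j hj hji
        refine fin2_not_one fun hone => hji ?_
        rw [add_right_comm x] at hone
        exact huniq x j (by simpa using hj) i hi hone hxi
      · intro h; exact absurd (Finset.mem_range.2 hi) h
    by_contra hc
    simp only [mem_union, not_or] at hc
    have a := fin2_not_one (s := bsum α β q x) hc.1
    have b := fin2_not_one (s := bsum α β q (x + (t : Circ))) hc.2
    rw [a, b] at hs
    revert hs; decide
  have hle : (q : ℝ≥0∞) * volume V ≤ volume E + volume E := by
    rw [← hUv]
    refine (measure_mono hsub).trans ((measure_union_le _ _).trans ?_)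
    rw [(measurePreserving_add_right (volume : Measure Circ) (t : Circ)).measure_preimage
      hEm.nullMeasurableSet]
  have hV2 := change_volume h0 h1 ht0 (by linarith)
  have h3 : ENNReal.ofReal (1 / 32) ≤ volume E + volume E := by
    refine le_trans ?_ ((mul_le_mul_right hV2 _).trans hle)
    rw [← ENNReal.ofReal_natCast, ← ENNReal.ofReal_mul (by positivity)]
    apply ENNReal.ofReal_le_ofReal
    rw [ht]; field_simp; norm_num
  by_contra hlt
  push Not at hlt
  have := ENNReal.add_lt_add hlt hlt
  rw [← ENNReal.ofReal_add (by norm_num) (by norm_num)] at this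
  norm_num at this h3
  exact absurd h3 (not_le.2 this)

lemma skew_not_rigid {β : ℝ} (h0 : 0 < β) (h1 : β < 1 / 2) :
    ¬ Rigid (skew (√2 - 1) β) muT := by
  set α : ℝ := √2 - 1 with hα
  rintro ⟨q, hq, h⟩
  have hA := h (univ ×ˢ {(0 : Fin 2)}) (MeasurableSet.univ.prod (measurableSet_singleton _))
  have hlow : ∀ k : ℕ, 1 ≤ k → ENNReal.ofReal (1 / 64) * 2⁻¹ ≤
      muT ((((skew α β)^[k]) '' (univ ×ˢ {(0 : Fin 2)})) ∆ (univ ×ˢ {(0 : Fin 2)})) := by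
    intro k hk
    have hv := bsum_volume h0 h1 hk
    set E : Set Circ := {x | bsum α β k x = 1} with hE
    have hEm : MeasurableSet E := measurable_bsum α β k (measurableSet_singleton 1)
    set F : Set Circ := (fun x => x + -(k • (α : Circ))) ⁻¹' E with hF
    have hFv : volume F = volume E :=
      (measurePreserving_add_right (volume : Measure Circ) _).measure_preimage
        hEm.nullMeasurableSet
    have hsub : F ×ˢ {(1 : Fin 2)} ⊆
        (((skew α β)^[k]) '' (univ ×ˢ {(0 : Fin 2)})) ∆ (univ ×ˢ {(0 : Fin 2)}) := by
      rintro ⟨y, s⟩ ⟨hy, hs⟩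
      have hs' : s = 1 := hs
      subst hs'
      left
      refine ⟨⟨(y + -(k • (α : Circ)), 0), ⟨trivial, rfl⟩, ?_⟩, ?_⟩
      · rw [skew_iterate]
        refine Prod.ext (by simp) ?_
        have : bsum α β k (y + -(k • (α : Circ))) = 1 := hy
        simpa [bsum] using this
      · rintro ⟨_, h⟩
        have : (1 : Fin 2) = 0 := h
        revert this; decide
    refine le_trans ?_ (measure_mono hsub)
    rw [muT_prod_singleton, hFv]
    gcongr
  have hev : ∀ᶠ n in atTop, ENNReal.ofReal (1 / 64) * 2⁻¹ ≤
      muT ((((skew α β)^[q n]) '' (univ ×ˢ {(0 : Fin 2)})) ∆ (univ ×ˢ {(0 : Fin 2)})) := by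
    filter_upwards [hq.eventually_ge_atTop 1] with n hn using hlow _ hn
  have := ge_of_tendsto hA hev
  simp at this

lemma alpha_bad {n : ℕ} (hn : 1 ≤ n) (m : ℤ) {N : ℕ} (hN : n ≤ N) :
    1 / (4 * ((N : ℝ) + 1)) ≤ |(n : ℝ) * (√2 - 1) - m| := by
  have h := sqrt_two_bad (n := (n : ℤ)) (m := n + m) (by omega) (N := (N : ℝ) + 1)
    (by linarith [Nat.cast_nonneg (α := ℝ) N]) (by
      have : (n : ℝ) ≤ N := by exact_mod_cast hN
      simp; linarith)
  push_cast at h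
  convert h using 2
  ring

lemma alpha_irr : Irrational (√2 - 1) := by
  exact_mod_cast irrational_sqrt_two.sub_intCast 1

/-- Open sets of points well approximated from below by the orbit of `0`. -/
def apprSet (α : ℝ) (K : ℕ) : Set ℝ :=
  ⋃ k : ℕ, ⋃ p : ℤ, Ioo (k * α + p) (k * α + p + 1 / (4 * (((K * (k + 1) : ℕ) : ℝ) + 1)))

lemma dense_orbit {α : ℝ} (hα : Irrational α) : Dense {x : ℝ | ∃ k : ℕ, ∃ p : ℤ, x = k * α + p} := by
  have hd : DenseRange (· • (α : Circ) : ℕ → Circ) := by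
    rw [← denseRange_zsmul_iff_nsmul, AddCircle.denseRange_zsmul_coe_iff]; simpa using hα
  have h2 := (QuotientAddGroup.dense_preimage_mk (N := AddSubgroup.zmultiples (1 : ℝ))).2 hd
  refine h2.mono ?_
  rintro x ⟨k, hk⟩
  have hk' : ((k * α : ℝ) : Circ) = (x : Circ) := by
    rw [← nsmul_eq_mul, AddCircle.coe_nsmul]; exact hk
  have hz : ((x - k * α : ℝ) : Circ) = 0 := by rw [AddCircle.coe_sub, hk', sub_self]
  obtain ⟨p, hp⟩ := (AddCircle.coe_eq_zero_iff 1).1 hz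
  refine ⟨k, p, ?_⟩
  have : (p : ℝ) = x - k * α := by simpa using hp
  linarith

lemma dense_apprSet {α : ℝ} (hα : Irrational α) (K : ℕ) : Dense (apprSet α K) := by
  have : Dense (closure (apprSet α K)) := by
    refine (dense_orbit hα).mono ?_
    rintro x ⟨k, p, rfl⟩
    have hsub : Ioo (k * α + p) (k * α + p + 1 / (4 * (((K * (k + 1) : ℕ) : ℝ) + 1))) ⊆
        apprSet α K := fun y hy => mem_iUnion.2 ⟨k, mem_iUnion.2 ⟨p, hy⟩⟩
    refine closure_mono hsub ?_
    have hpos : 0 < 1 / (4 * (((K * (k + 1) : ℕ) : ℝ) + 1)) := by positivity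
    rw [closure_Ioo (by linarith)]
    exact ⟨le_refl _, by linarith⟩
  exact dense_closure.1 this

lemma isOpen_apprSet (α : ℝ) (K : ℕ) : IsOpen (apprSet α K) :=
  isOpen_iUnion fun _ => isOpen_iUnion fun _ => isOpen_Ioo

lemma countable_ZP (α : ℝ) : (ZPlusAlphaZ α).Countable := by
  have : ZPlusAlphaZ α = range (fun q : ℤ × ℤ => (q.1 : ℝ) + q.2 * α) := by
    ext x
    constructor
    · rintro ⟨m, k, h⟩; exact ⟨(m, k), h.symm⟩
    · rintro ⟨⟨m, k⟩, h⟩; exact ⟨m, k, h.symm⟩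
  rw [this]; exact countable_range _

lemma exists_beta {α : ℝ} (hα : Irrational α) : ∃ β : ℝ, 1 / 4 < β ∧ β < 1 / 2 ∧
    Irrational β ∧ Irrational (β + 1 / 2) ∧ β ∉ ZPlusAlphaZ α ∧ β + 1 / 2 ∉ ZPlusAlphaZ α ∧
    ∀ K, β ∈ apprSet α K := by
  set C : Set ℝ := (range ((↑) : ℚ → ℝ) ∪ (fun x => x + 1 / 2) ⁻¹' (range ((↑) : ℚ → ℝ))) ∪
    (ZPlusAlphaZ α ∪ (fun x => x + 1 / 2) ⁻¹' (ZPlusAlphaZ α)) with hC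
  have hinj : Function.Injective (fun x : ℝ => x + 1 / 2) := add_left_injective _
  have hCc : C.Countable :=
    ((countable_range _).union ((countable_range _).preimage hinj)).union
      ((countable_ZP α).union ((countable_ZP α).preimage hinj))
  have hd : Dense (Cᶜ ∩ ⋂ K, apprSet α K) :=
    Dense.inter_of_Gδ hCc.isGδ_compl (IsGδ.iInter_of_isOpen fun K => isOpen_apprSet α K)
      (hCc.dense_compl ℝ) (dense_iInter_of_isOpen (fun K => isOpen_apprSet α K)
        fun K => dense_apprSet hα K)
  obtain ⟨β, ⟨hb1, hb2⟩, hc, hK⟩ := hd.exists_mem_open (isOpen_Ioo (a := (1 / 4 : ℝ)) (b := 1 / 2))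
    (nonempty_Ioo.2 (by norm_num)) |>.imp fun x h => And.intro h.2 h.1
  simp only [hC, mem_compl_iff, mem_union, not_or] at hc
  exact ⟨β, hb1, hb2, hc.1.1, hc.1.2, hc.2.1, hc.2.2, fun K => mem_iInter.1 hK K⟩

lemma lang_not_LR {β : ℝ} (h0 : 1 / 4 < β) (h1 : β < 1 / 2) (hb : ∀ K, β ∈ apprSet (√2 - 1) K) :
    ¬ LinearlyRecurrent (LVST (√2 - 1) ![β, β + 1 / 2]
      ![(1 : Equiv.Perm (Fin 2)), Equiv.swap 0 1, 1]) := by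
  set α : ℝ := √2 - 1 with hα
  rintro ⟨K, -, hK⟩
  obtain ⟨k, hk⟩ := mem_iUnion.1 (hb K)
  obtain ⟨p, hp1, hp2⟩ := mem_iUnion.1 hk
  set N := K * (k + 1) with hN
  set ε : ℝ := β - (k * α + p) with hε
  have hε0 : 0 < ε := by linarith
  have hεN : ε < 1 / (4 * ((N : ℝ) + 1)) := by linarith
  have hε4 : ε < 1 / 4 := by
    refine hεN.trans_le ?_
    apply one_div_le_one_div_of_le (by norm_num)
    linarith [Nat.cast_nonneg (α := ℝ) N]
  set code : Circ × Fin 2 → ℕ → Fin 3 × Fin 2 := fun z i =>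
    vsCode ![β, β + 1 / 2] ((VT α β)^[i] z) with hcode
  have hlang : ∀ z n, List.ofFn (fun i : Fin n => code z i) ∈ LVST α ![β, β + 1 / 2]
      ![(1 : Equiv.Perm (Fin 2)), Equiv.swap 0 1, 1] := by
    intro z n
    refine ⟨z, fun i => ?_⟩
    simp only [List.get_eq_getElem, List.getElem_ofFn]
    rfl
  have hcode0 : ∀ x : ℝ, ∀ s i, (code ((x : Circ), s) i).1 = 0 ↔ Int.fract (x + i * α) < β := by
    intro x s i
    have : (((VT α β)^[i]) ((x : Circ), s)).1 = ((x + i * α : ℝ) : Circ) := by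
      rw [VT_eq, skew_iterate, AddCircle.coe_add, ← nsmul_eq_mul, AddCircle.coe_nsmul]
    simp only [hcode, vsCode]
    rw [this, atomIdx_eq_zero, circleRepr_coe]
  have hfac := hK _ (hlang (((0 : ℝ) : Circ), 0) (k + 1)) _ (hlang ((α : Circ), 0) N) (by simp [hN])
  obtain ⟨u, u', hu⟩ := hfac
  have hlen := congrArg List.length hu
  simp only [List.length_append, List.length_ofFn] at hlen
  have hget : ∀ i, i < k + 1 → code ((α : Circ), 0) (u.length + i) =
      code (((0 : ℝ) : Circ), 0) i := by
    intro i hi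
    have h := congrArg (fun l => l[u.length + i]?) hu
    simp only [List.append_assoc] at h
    rw [List.getElem?_append_right (by omega), List.getElem?_append_left (by simp; omega)] at h
    simp only [add_tsub_cancel_left, List.getElem?_ofFn] at h
    rw [dif_pos (by omega), dif_pos hi] at h
    exact Option.some.inj h
  set j := u.length with hj
  have w0 : (code (((0 : ℝ) : Circ), 0) 0).1 = 0 := by
    rw [hcode0]; simp; linarith
  have wk : (code (((0 : ℝ) : Circ), 0) k).1 = 0 := by
    rw [hcode0]
    have : (0 : ℝ) + k * α = (β - ε) + ((-p : ℤ) : ℝ) := by push_cast; linarith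
    rw [this, Int.fract_add_intCast, Int.fract_eq_self.2 ⟨by linarith, by linarith⟩]
    linarith
  rw [← hget 0 (by omega), hcode0] at w0
  rw [← hget k (by omega), hcode0] at wk
  simp only [add_zero] at w0
  have hy := Int.fract_add_floor (α + j * α)
  have hy0 := Int.fract_nonneg (α + j * α)
  set y := Int.fract (α + j * α) with hydef
  have hk2 : α + ((j + k : ℕ) : ℝ) * α = (y + (β - ε)) + ((⌊α + j * α⌋ - p : ℤ) : ℝ) := by
    push_cast; linarith
  rw [hk2, Int.fract_add_intCast, Int.fract_eq_self.2 ⟨by linarith, by linarith⟩] at wk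
  have hbad := alpha_bad (n := j + 1) (by omega) ⌊α + j * α⌋ (N := N) (by omega)
  have he : ((j + 1 : ℕ) : ℝ) * (√2 - 1) - (⌊α + j * α⌋ : ℝ) = y := by
    rw [← hα]; push_cast; linarith
  rw [he, abs_of_nonneg hy0] at hbad
  linarith

end VSProof

theorem stmt_0 :
    ∃ α β₁ β₂ : ℝ,
      Irrational α ∧ 0 < α ∧ α < 1 ∧
      Irrational β₁ ∧ Irrational β₂ ∧ 0 < β₁ ∧ β₁ < β₂ ∧ β₂ < 1 ∧
      β₁ ≠ 1 - α ∧ β₂ ≠ 1 - α ∧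
      β₁ ∉ ZPlusAlphaZ α ∧ β₂ ∉ ZPlusAlphaZ α ∧ β₂ - β₁ ∉ ZPlusAlphaZ α ∧
      ¬ LinearlyRecurrent
          (LVST α ![β₁, β₂] ![(1 : Equiv.Perm (Fin 2)), Equiv.swap 0 1, 1]) ∧
      ∃ μ : Measure (AddCircle (1 : ℝ) × Fin 2),
        IsProbabilityMeasure μ ∧
        MeasurePreserving (VST α ![β₁, β₂] ![(1 : Equiv.Perm (Fin 2)), Equiv.swap 0 1, 1]) μ μ ∧
        (∀ ν : Measure (AddCircle (1 : ℝ) × Fin 2), IsProbabilityMeasure ν →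
          MeasurePreserving (VST α ![β₁, β₂] ![(1 : Equiv.Perm (Fin 2)), Equiv.swap 0 1, 1]) ν ν →
            ν = μ) ∧
        ¬ Rigid (VST α ![β₁, β₂] ![(1 : Equiv.Perm (Fin 2)), Equiv.swap 0 1, 1]) μ := by
  obtain ⟨β, h4, h2, hi, hi', hz, hz', hK⟩ := exists_beta alpha_irr
  have h0 : 0 < β := by linarith
  have hs1 : 1 < √2 := by rw [Real.lt_sqrt (by norm_num)]; norm_num
  have hs2 : √2 < 2 := by rw [Real.sqrt_lt' (by norm_num)]; norm_num
  have hmem : 1 - (√2 - 1) ∈ ZPlusAlphaZ (√2 - 1) := ⟨1, -1, by push_cast; ring⟩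
  have hT : VST (√2 - 1) ![β, β + 1 / 2] ![(1 : Equiv.Perm (Fin 2)), Equiv.swap 0 1, 1] =
      skew (√2 - 1) β := VT_eq _ _
  refine ⟨√2 - 1, β, β + 1 / 2, alpha_irr, by linarith, by linarith, hi, hi', h0, by linarith,
    by linarith, fun h => hz (h ▸ hmem), fun h => hz' (h ▸ hmem), hz, hz', ?_,
    lang_not_LR h4 h2 hK, muT, inferInstance, ?_, ?_, ?_⟩
  · rintro ⟨m, k, h⟩
    have h' : (1 : ℝ) = 2 * m + 2 * k * (√2 - 1) := by linarith
    by_cases hk : k = 0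
    · subst hk
      have : (1 : ℤ) = 2 * m := by
        have h3 : (1 : ℝ) = 2 * m := by simpa using h'
        exact_mod_cast h3
      omega
    · have hirr := alpha_irr.intCast_mul (m := 2 * k) (by omega)
      apply hirr
      exact ⟨1 - 2 * m, by push_cast; linarith⟩
  · rw [hT]; exact skew_mp _ _
  · intro ν hν hmp
    rw [hT] at hmp
    exact skew_unique alpha_irr h0 h2 ν hmp
  · rw [hT]; exact skew_not_rigid h0 h2
end

section
/- If (X_L, S) is minimal and there exists an S-invariant Borel probability measure μ on X_L with limsup_{n→∞} n·e_n(S, μ) > 0, then (X_L, S) is uniquely ergodic, i.e., μ is the only S-invariant Borel probability measure on X_L. -/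
open MeasureTheory Filter Set
open scoped ENNReal symmDiff Classical

/-! ### Proof of the theorem -/

lemma bosh_iter {A : Type*} (L : Set (List A)) (p : ℕ) (x : XL L) (i : ℕ) :
    ((shiftXL L)^[p] x).1 i = x.1 (i + p) := by
  induction p generalizing x with
  | zero => rfl
  | succ p ih =>
    rw [Function.iterate_succ_apply, ih]
    simp only [shiftXL]
    congr 1

/-- `B` depends only on the first `m` coordinates. -/
def BoshDet {A : Type*} (L : Set (List A)) (m : ℕ) (B : Set (XL L)) : Prop :=
  ∀ x y : XL L, (∀ i < m, x.1 i = y.1 i) → (x ∈ B ↔ y ∈ B)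

lemma bosh_det_mono {A : Type*} {L : Set (List A)} {m k : ℕ} {B : Set (XL L)}
    (h : BoshDet L m B) (hmk : m ≤ k) : BoshDet L k B :=
  fun x y hxy => h x y fun i hi => hxy i (lt_of_lt_of_le hi hmk)

lemma bosh_det_measurable {A : Type*} [Fintype A] [MeasurableSpace A] [MeasurableSingletonClass A]
    {L : Set (List A)} {m : ℕ} {B : Set (XL L)} (h : BoshDet L m B) : MeasurableSet B := by
  let r : XL L → (Fin m → A) := fun x i => x.1 i
  have hr : Measurable r := by
    refine measurable_pi_lambda _ fun i => ?_
    exact (measurable_pi_apply (X := fun _ : ℕ => A) i.1).comp measurable_subtype_coe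
  have : B = r ⁻¹' (r '' B) := by
    ext x
    constructor
    · intro hx; exact ⟨x, hx, rfl⟩
    · rintro ⟨y, hy, hyx⟩
      refine (h y x fun i hi => ?_).1 hy
      exact congrFun hyx ⟨i, hi⟩
  rw [this]
  exact hr (Set.toFinite (r '' B)).measurableSet

lemma bosh_dense {A : Type*} [Fintype A] [MeasurableSpace A] [MeasurableSingletonClass A]
    (L : Set (List A)) (μ : Measure (XL L)) [IsProbabilityMeasure μ] :
    μ.MeasureDense {B | ∃ m, BoshDet L m B} := by
  have halg : IsSetAlgebra {B : Set (XL L) | ∃ m, BoshDet L m B} := by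
    refine ⟨?_, ?_, ?_⟩
    · exact ⟨0, fun x y _ => by simp⟩
    · rintro s ⟨m, hm⟩
      exact ⟨m, fun x y h => by simp [hm x y h]⟩
    · rintro s t ⟨m, hm⟩ ⟨k, hk⟩
      refine ⟨max m k, fun x y h => ?_⟩
      have h1 := bosh_det_mono hm (le_max_left m k) x y h
      have h2 := bosh_det_mono hk (le_max_right m k) x y h
      simp [h1, h2]
  refine Measure.MeasureDense.of_generateFrom_isSetAlgebra_finite μ halg ?_
  · apply le_antisymm
    · rintro s ⟨t, ht, rfl⟩
      have key : @Measurable _ _ (MeasurableSpace.generateFrom {B | ∃ m, BoshDet L m B})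
          MeasurableSpace.pi (Subtype.val : XL L → ℕ → A) := by
        refine @measurable_pi_lambda _ _ _ (MeasurableSpace.generateFrom {B | ∃ m, BoshDet L m B})
          _ _ fun i => ?_
        intro u _
        refine MeasurableSpace.measurableSet_generateFrom (s := {B | ∃ m, BoshDet L m B}) ⟨i + 1, fun x y h => ?_⟩
        simp [h i (Nat.lt_succ_self i)]
      exact key ht
    · refine MeasurableSpace.generateFrom_le ?_
      rintro s ⟨m, hm⟩
      exact bosh_det_measurable hm

/-- Number of visits to `B` before time `N`. -/
noncomputable def boshCnt {A : Type*} (L : Set (List A)) (B : Set (XL L)) (N : ℕ) (x : XL L) : ℕ :=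
  ∑ i ∈ Finset.range N, if (shiftXL L)^[i] x ∈ B then 1 else 0

lemma bosh_cnt_congr {A : Type*} {L : Set (List A)} {m : ℕ} {B : Set (XL L)}
    (h : BoshDet L m B) (N : ℕ) (x y : XL L) (hxy : ∀ i < N + m, x.1 i = y.1 i) :
    boshCnt L B N x = boshCnt L B N y := by
  unfold boshCnt
  refine Finset.sum_congr rfl fun i hi => ?_
  have hi := Finset.mem_range.1 hi
  have := h ((shiftXL L)^[i] x) ((shiftXL L)^[i] y) fun j hj => by
    rw [bosh_iter, bosh_iter]; exact hxy _ (by omega)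
  simp [this]

lemma bosh_cnt_step {A : Type*} (L : Set (List A)) (B : Set (XL L)) (N : ℕ) (x : XL L) :
    boshCnt L B N x ≤ boshCnt L B N (shiftXL L x) + 1 := by
  have h1 := Finset.sum_range_succ (fun i => if (shiftXL L)^[i] x ∈ B then 1 else 0) N
  have h2 := Finset.sum_range_succ' (fun i => if (shiftXL L)^[i] x ∈ B then 1 else 0) N
  have h4 : ∑ k ∈ Finset.range N, (if (shiftXL L)^[k + 1] x ∈ B then 1 else 0)
      = ∑ k ∈ Finset.range N, (if (shiftXL L)^[k] (shiftXL L x) ∈ B then 1 else 0) :=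
    Finset.sum_congr rfl fun k _ => by
      have : (shiftXL L)^[k + 1] x = (shiftXL L)^[k] (shiftXL L x) := rfl
      simp [this]
  unfold boshCnt
  rw [h1] at h2
  have h3 : (if (shiftXL L)^[0] x ∈ B then 1 else 0) ≤ 1 := by split_ifs <;> simp
  omega

lemma bosh_occurs {A : Type*} (L : Set (List A)) (hmin : MinimalLang L)
    (w : List A) (hw : w ∈ L) (x : XL L) : ∃ p, (shiftXL L)^[p] x ∈ langCylinder L w := by
  obtain ⟨n, hn⟩ := hmin w hw
  obtain ⟨u, u', h⟩ := hn (wordAt x.1 0 n) (x.2 0 n) (by simp [wordAt])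
  refine ⟨u.length, fun i => ?_⟩
  rw [bosh_iter]
  have hlen : n = u.length + w.length + u'.length := by
    have := congrArg List.length h
    simpa [wordAt, add_assoc] using this
  have hi := i.2
  have h1 : (wordAt x.1 0 n)[u.length + i.1]? = some (x.1 (u.length + i.1)) := by
    rw [List.getElem?_eq_getElem (by simp [wordAt]; omega)]
    simp [wordAt]
  rw [h, List.getElem?_append_left (by simp), List.getElem?_append_right (by simp)] at h1
  simp at h1
  rw [add_comm]
  simpa using h1.symm

lemma bosh_cyl_wordAt {A : Type*} (L : Set (List A)) (x y : XL L) (k : ℕ) :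
    y ∈ langCylinder L (wordAt x.1 0 k) ↔ ∀ i < k, y.1 i = x.1 i := by
  constructor
  · intro h i hi
    have := h ⟨i, by simpa [wordAt] using hi⟩
    simpa [wordAt] using this
  · intro h i
    have hi : i.1 < k := by have := i.2; simpa [wordAt] using this
    rw [h i.1 hi]
    rw [List.get_eq_getElem]
    simp [wordAt]

lemma bosh_cyl_det {A : Type*} (L : Set (List A)) (w : List A) :
    BoshDet L w.length (langCylinder L w) := by
  intro x y h
  simp only [langCylinder, mem_ofPred_eq]
  exact forall_congr' fun i => by rw [h i i.2]

/-- Discrete intermediate value property. -/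
lemma bosh_ivt (g : ℕ → ℕ) (hg : ∀ j, g j ≤ g (j + 1) + 1) (p k : ℕ) (h0 : k ≤ g 0)
    (hp : g p ≤ k) : ∃ j, g j = k := by
  by_contra hne
  push Not at hne
  have : ∀ j, k < g j := by
    intro j
    induction j with
    | zero => exact lt_of_le_of_ne h0 (hne 0).symm
    | succ j ih =>
      have := hg j
      have := hne (j + 1)
      omega
  have := this p
  omega

lemma bosh_cnt_measurable {A : Type*} [MeasurableSpace A] (L : Set (List A))
    (hS : Measurable (shiftXL L)) (D : Set (XL L)) (hD : MeasurableSet D) (N : ℕ) :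
    Measurable (boshCnt L D N) := by
  unfold boshCnt
  refine Finset.measurable_sum _ fun i _ => ?_
  exact Measurable.ite ((hS.iterate i) hD) measurable_const measurable_const

lemma bosh_markov {A : Type*} [MeasurableSpace A] (L : Set (List A))
    (μ : Measure (XL L)) (hinv : MeasurePreserving (shiftXL L) μ μ)
    (D : Set (XL L)) (hD : MeasurableSet D) (N : ℕ) (hN : 0 < N) :
    μ {x | N ≤ 3 * boshCnt L D N x} ≤ 3 * μ D := by
  have hm := bosh_cnt_measurable L hinv.measurable D hD N
  have hint : ∫⁻ x, (boshCnt L D N x : ℝ≥0∞) ∂μ = N * μ D := by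
    unfold boshCnt
    push_cast
    rw [lintegral_finsetSum]
    · have : ∀ i ∈ Finset.range N,
          ∫⁻ x, (if (shiftXL L)^[i] x ∈ D then (1 : ℝ≥0∞) else 0) ∂μ = μ D := by
        intro i _
        have h := (hinv.iterate i).measure_preimage hD.nullMeasurableSet
        rw [← h, ← lintegral_indicator_one ((hinv.measurable.iterate i) hD)]
        refine lintegral_congr fun x => ?_
        simp [Set.indicator_apply]
      rw [Finset.sum_congr rfl this]
      simp
    · intro i _
      exact Measurable.ite ((hinv.measurable.iterate i) hD) measurable_const measurable_const
  have hf : Measurable fun x => 3 * (boshCnt L D N x : ℝ≥0∞) :=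
    (Measurable.comp (g := fun n : ℕ => (n : ℝ≥0∞)) measurable_from_top hm).const_mul 3
  have := mul_meas_ge_le_lintegral (μ := μ) hf (N : ℝ≥0∞)
  rw [lintegral_const_mul' _ _ (by simp), hint] at this
  have hset : {x | (N : ℝ≥0∞) ≤ 3 * (boshCnt L D N x : ℝ≥0∞)} = {x | N ≤ 3 * boshCnt L D N x} := by
    ext x
    simp only [mem_ofPred_eq]
    exact_mod_cast Iff.rfl
  rw [hset] at this
  have h2 : (3 : ℝ≥0∞) * (N * μ D) = N * (3 * μ D) := by ring
  rw [h2] at this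
  exact (ENNReal.mul_le_mul_iff_right (by exact_mod_cast hN.ne') (by simp)).1 this

lemma bosh_ergodic {A : Type*} [Fintype A] [MeasurableSpace A] [MeasurableSingletonClass A]
    (L : Set (List A)) (hmin : MinimalLang L)
    (μ : Measure (XL L)) (hprob : IsProbabilityMeasure μ)
    (hinv : MeasurePreserving (shiftXL L) μ μ)
    (c : ℝ≥0∞) (hc : 0 < c)
    (hfreq : ∃ᶠ n : ℕ in atTop, ∀ w ∈ L, w.length = n → c ≤ n * μ (langCylinder L w)) :
    Ergodic (shiftXL L) μ := by
  refine { toMeasurePreserving := hinv, aeconst_set := ?_ }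
  intro E hE hEinv
  by_contra hcon
  rw [eventuallyConst_set', ae_eq_empty, ae_eq_univ] at hcon
  push Not at hcon
  obtain ⟨hE1, hE2⟩ := hcon
  -- choice of the approximation
  obtain ⟨ε, hε0, hεlt⟩ : ∃ ε : ℝ, 0 < ε ∧
      ENNReal.ofReal ε < min (c / 18) (min (μ E / 3) (μ Eᶜ / 3)) := by
    have hpos : 0 < min (c / 18) (min (μ E / 3) (μ Eᶜ / 3)) := by
      refine lt_min (ENNReal.div_pos hc.ne' (by simp)) (lt_min ?_ ?_)
      · exact ENNReal.div_pos hE1 (by simp)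
      · exact ENNReal.div_pos hE2 (by simp)
    obtain ⟨e, he0, he⟩ := ENNReal.lt_iff_exists_real_btwn.1 hpos
    exact ⟨e, by simpa using he.1, he.2⟩
  obtain ⟨B, ⟨m, hB⟩, hBE⟩ := (bosh_dense L μ).approx E hE (measure_ne_top _ _) ε hε0
  have hBm := bosh_det_measurable hB
  set D := E ∆ B with hDdef
  have hD : MeasurableSet D := hE.symmDiff hBm
  have hDlt := hBE.trans hεlt
  have hD1 : 18 * μ D < c := by
    have := hDlt.trans_le (min_le_left _ _)
    rw [ENNReal.lt_div_iff_mul_lt (by simp) (by simp)] at this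
    rwa [mul_comm]
  have hD2 : 3 * μ D < μ E := by
    have := hDlt.trans_le ((min_le_right _ _).trans (min_le_left _ _))
    rw [ENNReal.lt_div_iff_mul_lt (by simp) (by simp)] at this
    rwa [mul_comm]
  have hD3 : 3 * μ D < μ Eᶜ := by
    have := hDlt.trans_le ((min_le_right _ _).trans (min_le_right _ _))
    rw [ENNReal.lt_div_iff_mul_lt (by simp) (by simp)] at this
    rwa [mul_comm]
  -- choice of the scale
  obtain ⟨n, hn, hnw⟩ := (frequently_atTop.1 hfreq) (2 * m + 10)
  obtain ⟨N, rfl⟩ : ∃ N, n = N + m := ⟨n - m, by omega⟩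
  have hN : 0 < N := by omega
  have hmk := bosh_markov L μ hinv D hD N hN
  have hEit : ∀ i x, (shiftXL L)^[i] x ∈ E ↔ x ∈ E := by
    intro i
    induction i with
    | zero => intro x; rfl
    | succ i ih =>
      intro x
      rw [Function.iterate_succ_apply, ih, ← mem_preimage, hEinv]
  have hcE : ∀ x ∈ E, boshCnt L B N x + boshCnt L D N x = N := by
    intro x hx
    unfold boshCnt
    rw [← Finset.sum_add_distrib]
    rw [Finset.sum_congr rfl (g := fun _ => 1)]
    · simp
    · intro i _
      have := (hEit i x).2 hx
      by_cases h : (shiftXL L)^[i] x ∈ B <;> simp [hDdef, mem_symmDiff, this, h]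
  have hcE' : ∀ x ∉ E, boshCnt L B N x = boshCnt L D N x := by
    intro x hx
    unfold boshCnt
    refine Finset.sum_congr rfl fun i _ => ?_
    have : (shiftXL L)^[i] x ∉ E := fun h => hx ((hEit i x).1 h)
    by_cases h : (shiftXL L)^[i] x ∈ B <;> simp [hDdef, mem_symmDiff, this, h]
  obtain ⟨x, hxE, hx⟩ : ∃ x ∈ E, 3 * boshCnt L D N x < N := by
    by_contra hno
    push Not at hno
    exact absurd (measure_mono (μ := μ) (fun x hx => hno x hx : E ⊆ {x | N ≤ 3 * boshCnt L D N x}))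
      (not_le.2 (hmk.trans_lt hD2))
  obtain ⟨y, hyE, hy⟩ : ∃ y ∈ Eᶜ, 3 * boshCnt L D N y < N := by
    by_contra hno
    push Not at hno
    exact absurd (measure_mono (μ := μ) (fun x hx => hno x hx : Eᶜ ⊆ {x | N ≤ 3 * boshCnt L D N x}))
      (not_le.2 (hmk.trans_lt hD3))
  have hx' := hcE x hxE
  have hy' := hcE' y hyE
  obtain ⟨p, hp⟩ := bosh_occurs L hmin (wordAt y.1 0 (N + m)) (y.2 0 _) x
  rw [bosh_cyl_wordAt] at hp
  have hp' := bosh_cnt_congr hB N _ _ hp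
  set q := N / 3 with hq
  have hlevel : ∀ k ∈ Finset.Icc (q + 1) (2 * q),
      c ≤ (N + m : ℕ) * μ {z | boshCnt L B N z = k} := by
    intro k hk
    rw [Finset.mem_Icc] at hk
    obtain ⟨j, hj⟩ := bosh_ivt (fun j => boshCnt L B N ((shiftXL L)^[j] x))
      (fun j => by
        have := bosh_cnt_step L B N ((shiftXL L)^[j] x)
        rwa [← Function.iterate_succ_apply' (shiftXL L)] at this) p k
      (by simp only [Function.iterate_zero, id]; omega) (by simp only [hp']; omega)
    refine (hnw (wordAt ((shiftXL L)^[j] x).1 0 (N + m)) (((shiftXL L)^[j] x).2 0 _)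
      (by simp [wordAt])).trans ?_
    gcongr
    intro z hz
    rw [bosh_cyl_wordAt] at hz
    exact (bosh_cnt_congr hB N _ _ hz).trans hj
  have hmeas : ∀ k, MeasurableSet {z | boshCnt L B N z = k} := fun k =>
    (bosh_cnt_measurable L hinv.measurable B hBm N) (measurableSet_singleton k)
  have hsum : ∑ k ∈ Finset.Icc (q + 1) (2 * q), μ {z | boshCnt L B N z = k} ≤ 3 * μ D := by
    rw [← measure_biUnion_finset]
    · refine (measure_mono ?_).trans hmk
      intro z hz
      simp only [mem_iUnion, mem_ofPred_eq, Finset.mem_Icc] at hz ⊢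
      obtain ⟨k, hk, hzk⟩ := hz
      by_cases hzE : z ∈ E
      · have := hcE z hzE; omega
      · have := hcE' z hzE; omega
    · intro a _ b _ hab
      refine Set.disjoint_left.2 fun z hz hz' => hab ?_
      exact hz.symm.trans hz'
    · intro k _; exact hmeas k
  have h1 : (q : ℝ≥0∞) * c ≤ (N + m : ℕ) * (3 * μ D) := by
    calc (q : ℝ≥0∞) * c = ∑ k ∈ Finset.Icc (q + 1) (2 * q), c := by
          simp only [Finset.sum_const, Nat.card_Icc, nsmul_eq_mul]
          congr 2; omega
      _ ≤ ∑ k ∈ Finset.Icc (q + 1) (2 * q), (N + m : ℕ) * μ {z | boshCnt L B N z = k} :=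
          Finset.sum_le_sum hlevel
      _ = (N + m : ℕ) * ∑ k ∈ Finset.Icc (q + 1) (2 * q), μ {z | boshCnt L B N z = k} := by
          rw [Finset.mul_sum]
      _ ≤ _ := by gcongr
  have h2 : ((N + m : ℕ) : ℝ≥0∞) ≤ 6 * q := by
    have : N + m ≤ 6 * q := by omega
    exact_mod_cast this
  have h3 : ((N + m : ℕ) : ℝ≥0∞) * c ≤ (N + m : ℕ) * (18 * μ D) := by
    calc ((N + m : ℕ) : ℝ≥0∞) * c ≤ (6 * q) * c := by gcongr
      _ = 6 * (q * c) := by ring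
      _ ≤ 6 * ((N + m : ℕ) * (3 * μ D)) := by gcongr
      _ = _ := by ring
  have h4 : c ≤ 18 * μ D :=
    (ENNReal.mul_le_mul_iff_right (by exact_mod_cast (by omega : N + m ≠ 0)) (by simp)).1 h3
  exact absurd hD1 (not_lt.2 h4)

lemma bosh_pos {A : Type*} [MeasurableSpace A]
    (L : Set (List A)) (hmin : MinimalLang L)
    (μ : Measure (XL L)) (hprob : IsProbabilityMeasure μ)
    (hinv : MeasurePreserving (shiftXL L) μ μ) (w : List A) (hw : w ∈ L)
    (hm : MeasurableSet (langCylinder L w)) :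
    0 < μ (langCylinder L w) := by
  rw [pos_iff_ne_zero]
  intro h0
  have : μ (⋃ p : ℕ, (shiftXL L)^[p] ⁻¹' langCylinder L w) = 0 := by
    rw [measure_iUnion_null_iff]
    intro p
    rw [(hinv.iterate p).measure_preimage hm.nullMeasurableSet, h0]
  have hu : (⋃ p : ℕ, (shiftXL L)^[p] ⁻¹' langCylinder L w) = univ := by
    rw [eq_univ_iff_forall]
    intro x
    exact mem_iUnion.2 (bosh_occurs L hmin w hw x)
  rw [hu] at this
  simp at this

theorem stmt_1 {A : Type*} [Fintype A] [MeasurableSpace A] [MeasurableSingletonClass A]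
    (L : Set (List A)) (hL : IsLanguage L) (hmin : MinimalLang L)
    (μ : Measure (XL L)) (hprob : IsProbabilityMeasure μ)
    (hinv : MeasurePreserving (shiftXL L) μ μ)
    (hlim : 0 < Filter.limsup (fun n : ℕ => (n : ℝ≥0∞) * cylMinMeasure L μ n) Filter.atTop) :
    ∀ ν : Measure (XL L), IsProbabilityMeasure ν → MeasurePreserving (shiftXL L) ν ν → ν = μ := by
  intro ν hν hνinv
  obtain ⟨c, hc0, hc⟩ := exists_between hlim
  have hfreq := frequently_lt_of_lt_limsup (by isBoundedDefault) hc
  set lam : Measure (XL L) := (2⁻¹ : ℝ≥0∞) • (μ + ν) with hlam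
  have hlp : IsProbabilityMeasure lam := ⟨by
    rw [hlam, Measure.smul_apply, Measure.add_apply, measure_univ, measure_univ, smul_eq_mul,
      one_add_one_eq_two]
    exact ENNReal.inv_mul_cancel (by simp) (by simp)⟩
  have hli : MeasurePreserving (shiftXL L) lam lam := ⟨hinv.measurable, by
    rw [hlam, Measure.map_smul, Measure.map_add _ _ hinv.measurable, hinv.map_eq, hνinv.map_eq]⟩
  have herg : Ergodic (shiftXL L) lam := by
    refine bosh_ergodic L hmin lam hlp hli (2⁻¹ * c)
      (ENNReal.mul_pos (by simp) hc0.ne') (hfreq.mono fun n hn w hw hwn => ?_)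
    have hpos := bosh_pos L hmin μ hprob hinv w hw (bosh_det_measurable (bosh_cyl_det L w))
    have hle : cylMinMeasure L μ n ≤ μ (langCylinder L w) :=
      sInf_le ⟨w, hw, hwn, rfl, hpos⟩
    calc 2⁻¹ * c ≤ 2⁻¹ * (n * cylMinMeasure L μ n) := by gcongr
      _ ≤ 2⁻¹ * (n * (μ (langCylinder L w) + ν (langCylinder L w))) := by
          gcongr; exact hle.trans le_self_add
      _ = n * lam (langCylinder L w) := by
          rw [hlam, Measure.smul_apply, Measure.add_apply, smul_eq_mul]; ring
  have hμl : μ ≪ lam := Measure.AbsolutelyContinuous.mk fun s _ hs => by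
    rw [hlam, Measure.smul_apply, Measure.add_apply, smul_eq_mul] at hs
    simp at hs
    exact hs.1
  have hνl : ν ≪ lam := Measure.AbsolutelyContinuous.mk fun s _ hs => by
    rw [hlam, Measure.smul_apply, Measure.add_apply, smul_eq_mul] at hs
    simp at hs
    exact hs.2
  rw [herg.eq_of_absolutelyContinuous hνinv hνl, herg.eq_of_absolutelyContinuous hinv hμl]
end

section
/- The generalized Veech–Sataev system T is minimal — that is, the forward orbit {Tⁿ(x, s) : n ≥ 0} of every point (x, s) is dense in (ℝ/ℤ) × {1, …, d} (with the product of the circle topology and the discrete topology) — if and only if no nonempty proper subset of {1, …, d} is invariant under all the permutations σ₀, …, σ_r. -/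
open MeasureTheory Filter Set
open scoped ENNReal symmDiff Classical

/-! ### Auxiliary material for the proof -/

open Topology in
/-- One-sided punctured neighbourhoods. -/
def sideN (b : Bool) (x : ℝ) : Filter ℝ := if b then 𝓝[>] x else 𝓝[<] x

/-- One-sided limit sets. -/
def limF {d : ℕ} (O : ℝ → Set (Fin d)) (b : Bool) (x : ℝ) : Set (Fin d) :=
  {s | ∃ᶠ y in sideN b x, s ∈ O y}

theorem sideN_shift (b : Bool) (x c : ℝ) :
    Tendsto (fun y => y + c) (sideN b x) (sideN b (x + c)) := by
  cases b
  · simp only [sideN, Bool.false_eq_true, if_false]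
    refine tendsto_nhdsWithin_of_tendsto_nhds_of_eventually_within _ ?_ ?_
    · exact ((continuous_id.add continuous_const).tendsto x).mono_left nhdsWithin_le_nhds
    · filter_upwards [self_mem_nhdsWithin] with y hy
      simpa using hy
  · simp only [sideN, if_true]
    refine tendsto_nhdsWithin_of_tendsto_nhds_of_eventually_within _ ?_ ?_
    · exact ((continuous_id.add continuous_const).tendsto x).mono_left nhdsWithin_le_nhds
    · filter_upwards [self_mem_nhdsWithin] with y hy
      simpa using hy

theorem sideN_le (b : Bool) (x : ℝ) : sideN b x ≤ nhds x := by
  cases b <;> exact nhdsWithin_le_nhds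

theorem sideN_interval (b : Bool) (x : ℝ) {U : Set ℝ} (hU : U ∈ sideN b x) :
    ∃ u v : ℝ, u < v ∧ Ioo u v ⊆ U := by
  cases b
  · simp only [sideN, Bool.false_eq_true, if_false] at hU
    obtain ⟨l, hl, h⟩ := mem_nhdsLT_iff_exists_Ioo_subset.1 hU
    exact ⟨l, x, hl, h⟩
  · simp only [sideN, if_true] at hU
    obtain ⟨l, hl, h⟩ := mem_nhdsGT_iff_exists_Ioo_subset.1 hU
    exact ⟨x, l, hl, h⟩

theorem sideN_ev (b : Bool) (x : ℝ) {P : ℝ → Prop} (h : ∀ᶠ y in sideN b x, P y) :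
    ∀ᶠ y in sideN b x, ∀ᶠ z in nhds y, P z := by
  cases b
  · simp only [sideN, Bool.false_eq_true, if_false] at *
    filter_upwards [eventually_eventually_nhdsWithin.2 h, self_mem_nhdsWithin] with y hy hy'
    rwa [isOpen_Iio.nhdsWithin_eq hy'] at hy
  · simp only [sideN, if_true] at *
    filter_upwards [eventually_eventually_nhdsWithin.2 h, self_mem_nhdsWithin] with y hy hy'
    rwa [isOpen_Ioi.nhdsWithin_eq hy'] at hy

theorem dense_hit {α : ℝ} (hα : Irrational α) (x u v : ℝ) (huv : u < v) :
    ∃ n : ℕ, ∃ m : ℤ, x + n * α + m ∈ Ioo u v := by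
  have hd : DenseRange (fun n : ℕ => n • (α : AddCircle (1 : ℝ))) := by
    rw [← denseRange_zsmul_iff_nsmul]
    exact AddCircle.denseRange_zsmul_coe_iff.2 (by simpa using hα)
  have ho : IsOpen ((fun z : ℝ => (z : AddCircle (1 : ℝ))) '' Ioo (u - x) (v - x)) :=
    QuotientAddGroup.isOpenMap_coe _ isOpen_Ioo
  obtain ⟨n, z, hz, hzn⟩ := hd.exists_mem_open ho
    ((nonempty_Ioo.2 (by linarith)).image _)
  have : ((z - n * α : ℝ) : AddCircle (1 : ℝ)) = 0 := by
    have h2 : ((n * α : ℝ) : AddCircle (1 : ℝ)) = n • (α : AddCircle (1 : ℝ)) := by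
      rw [← AddCircle.coe_nsmul, nsmul_eq_mul]
    rw [AddCircle.coe_sub, h2, sub_eq_zero]
    exact hzn
  obtain ⟨m, hm⟩ := (AddCircle.coe_eq_zero_iff (1 : ℝ)).1 this
  refine ⟨n, m, ?_⟩
  simp at hm
  rw [hm]
  constructor <;> linarith [hz.1, hz.2]

/-- Semicontinuity of the one-sided limit sets. -/
theorem limF_ev {d : ℕ} (O : ℝ → Set (Fin d)) (b : Bool) (x : ℝ) :
    ∀ᶠ y in sideN b x, ∀ c, limF O c y ⊆ limF O b x := by
  have : ∀ᶠ y in sideN b x, ∀ s : Fin d, s ∉ limF O b x → ∀ᶠ z in nhds y, s ∉ O z := by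
    refine eventually_all.2 fun s => ?_
    by_cases hs : s ∈ limF O b x
    · exact Eventually.of_forall fun y h => (h hs).elim
    · have h1 : ∀ᶠ y in sideN b x, s ∉ O y := not_frequently.1 hs
      exact (sideN_ev b x h1).mono fun y hy _ => hy
  filter_upwards [this] with y hy c s hs
  by_contra hn
  exact hs ((hy s hn).filter_mono (sideN_le c y))

theorem limF_step {d : ℕ} {α : ℝ} {O : ℝ → Set (Fin d)} {g : ℝ → Equiv.Perm (Fin d)}
    (hstep : ∀ y s, s ∈ O y → g y s ∈ O (y + α)) {b : Bool} {x : ℝ} {π : Equiv.Perm (Fin d)}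
    (hπ : ∀ᶠ y in sideN b x, g y = π) : π '' limF O b x ⊆ limF O b (x + α) := by
  rintro _ ⟨s, hs, rfl⟩
  refine (sideN_shift b x α).frequently ?_
  refine (hs.and_eventually hπ).mono ?_
  rintro y ⟨h1, rfl⟩
  exact hstep y s h1

theorem limF_per {d : ℕ} {O : ℝ → Set (Fin d)}
    (hper : ∀ y (m : ℤ), O (y + m) = O y) (b : Bool) (x : ℝ) (m : ℤ) :
    limF O b (x + m) = limF O b x := by
  have key : ∀ (x : ℝ) (m : ℤ), limF O b x ⊆ limF O b (x + m) := by
    intro x m s hs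
    refine (sideN_shift b x m).frequently ?_
    exact Frequently.mono hs fun y hy => by rw [hper]; exact hy
  refine Subset.antisymm ?_ (key x m)
  have := key (x + m) (-m)
  simpa using this

theorem limF_card {d : ℕ} {α : ℝ} (hα : Irrational α) {O : ℝ → Set (Fin d)}
    {g : ℝ → Equiv.Perm (Fin d)}
    (hper : ∀ y (m : ℤ), O (y + m) = O y)
    (hstep : ∀ y s, s ∈ O y → g y s ∈ O (y + α))
    (hg : ∀ b x, ∃ π, ∀ᶠ y in sideN b x, g y = π) (b c : Bool) (x y : ℝ) :
    (limF O b x).ncard = (limF O c y).ncard := by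
  have h1 : ∀ b x, (limF O b x).ncard ≤ (limF O b (x + α)).ncard := by
    intro b x
    obtain ⟨π, hπ⟩ := hg b x
    rw [← ncard_image_of_injective _ π.injective]
    exact ncard_le_ncard (limF_step hstep hπ) (toFinite _)
  have h2 : ∀ b x (n : ℕ), (limF O b x).ncard ≤ (limF O b (x + n * α)).ncard := by
    intro b x n
    induction n with
    | zero => simp
    | succ n ih =>
      refine ih.trans ((h1 _ _).trans (le_of_eq ?_))
      congr 2
      push_cast; ring
  have h3 : ∀ b c x y, (limF O b x).ncard ≤ (limF O c y).ncard := by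
    intro b c x y
    obtain ⟨u, v, huv, hsub⟩ := sideN_interval c y (limF_ev O c y)
    obtain ⟨n, m, hnm⟩ := dense_hit hα x u v huv
    refine (h2 b x n).trans ?_
    rw [← limF_per hper b _ m]
    exact ncard_le_ncard (hsub hnm b) (toFinite _)
  exact le_antisymm (h3 _ _ _ _) (h3 _ _ _ _)

open Topology in
theorem core {d : ℕ} {α : ℝ} (hα : Irrational α) {O : ℝ → Set (Fin d)}
    {g : ℝ → Equiv.Perm (Fin d)} {D : Set ℝ}
    (hper : ∀ y (m : ℤ), O (y + m) = O y)
    (hstep : ∀ y s, s ∈ O y → g y s ∈ O (y + α))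
    (hg : ∀ b x, ∃ π, ∀ᶠ y in sideN b x, g y = π)
    (hgr : ∀ x, ∀ᶠ y in sideN true x, g y = g x)
    (hgD : ∀ x, x ∉ D → ∀ᶠ y in nhds x, g y = g x)
    (hD : ∀ x (k l : ℕ), 1 ≤ l → x + k * α ∈ D → x - l * α ∈ D → ∃ m : ℤ, x = m) :
    ∃ A : Set (Fin d), (∀ x, limF O true x = A) ∧ ∀ x, g x '' A = A := by
  have hcard := limF_card hα hper hstep hg
  set A : ℝ → Set (Fin d) := limF O true with hA
  have hAper : ∀ x (m : ℤ), A (x + m) = A x := limF_per hper true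
  have hAstep : ∀ x, g x '' A x = A (x + α) := by
    intro x
    refine eq_of_subset_of_ncard_le (limF_step hstep (hgr x)) ?_ (toFinite _)
    rw [ncard_image_of_injective _ (g x).injective]
    exact (hcard _ _ _ _).le
  have hside : ∀ b x, ∀ᶠ y in sideN b x, A y = limF O b x := by
    intro b x
    filter_upwards [limF_ev O b x] with y hy
    exact eq_of_subset_of_ncard_le (hy true) (hcard _ _ _ _).le (toFinite _)
  set J : Set ℝ := {x | ¬ ∀ᶠ y in 𝓝 x, A y = A x} with hJ
  have hJper : ∀ x (m : ℤ), x ∈ J → x + m ∈ J := by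
    intro x m hx h
    apply hx
    have ht : Tendsto (fun y : ℝ => y + m) (𝓝 x) (𝓝 (x + m)) :=
      (continuous_id.add continuous_const).tendsto x
    filter_upwards [ht.eventually h] with y hy
    rwa [hAper, hAper] at hy
  have hJiff : ∀ x, x ∉ D → (x ∈ J ↔ x + α ∈ J) := by
    intro x hx
    have key : ∀ᶠ y in 𝓝 x, (A (y + α) = A (x + α) ↔ A y = A x) := by
      filter_upwards [hgD x hx] with y hy
      rw [← hAstep, ← hAstep, hy]
      exact (image_injective.2 (g x).injective).eq_iff
    refine not_congr ?_
    rw [← eventually_congr key]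
    have : 𝓝 (x + α) = map (fun y => y + α) (𝓝 x) := by
      simpa using ((Homeomorph.addRight α).map_nhds_eq x).symm
    rw [this, eventually_map]
  have hJfin : (J ∩ Icc 0 1).Finite := by
    by_contra hinf
    obtain ⟨x, -, hx⟩ := Set.Infinite.exists_accPt_of_subset_isCompact hinf isCompact_Icc
      inter_subset_right
    rw [accPt_iff_frequently_nhdsNE] at hx
    have : ∀ b, ∀ᶠ y in sideN b x, y ∉ J := by
      intro b
      filter_upwards [sideN_ev b x (hside b x)] with y hy
      simp only [hJ, mem_setOf_eq, not_not]
      rw [hy.self_of_nhds]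
      exact hy
    refine hx ?_
    have h2 : 𝓝[≠] x = sideN false x ⊔ sideN true x := by
      simp only [sideN, Bool.false_eq_true, if_false, if_true]
      exact (nhdsLT_sup_nhdsGT x).symm
    rw [h2, eventually_sup]
    exact ⟨(this false).mono fun y h h' => h h'.1, (this true).mono fun y h h' => h h'.1⟩
  have hJno : ∀ x (ε : ℝ), (ε = 1 ∨ ε = -1) → ¬ ∀ k : ℕ, x + ε * (k * α) ∈ J := by
    intro x ε hε hall
    have hmem : ∀ k : ℕ, Int.fract (x + ε * (k * α)) ∈ J ∩ Icc 0 1 := by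
      intro k
      refine ⟨?_, Int.fract_nonneg _, (Int.fract_lt_one _).le⟩
      have := hJper _ (-⌊x + ε * (k * α)⌋) (hall k)
      rw [Int.fract]
      push_cast at this
      rwa [← sub_eq_add_neg] at this
    have hinj : Function.Injective (fun k : ℕ => Int.fract (x + ε * (k * α))) := by
      intro k l hkl
      obtain ⟨z, hz⟩ := Int.fract_eq_fract.1 hkl
      by_contra hne
      have hne' : ((k : ℤ) - l) ≠ 0 := by omega
      have hirr := hα.intCast_mul hne'
      rcases hε with rfl | rfl
      · refine hirr.ne_int z ?_
        push_cast; linarith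
      · refine hirr.ne_int (-z) ?_
        push_cast; linarith
    exact (infinite_range_of_injective hinj) (hJfin.subset (range_subset_iff.2 hmem))
  have hJint : ∀ x ∈ J, ∃ m : ℤ, x = m := by
    intro x hx
    have hf : ∃ k : ℕ, x + k * α ∈ D := by
      by_contra hcon
      push Not at hcon
      refine hJno x 1 (Or.inl rfl) fun k => ?_
      rw [one_mul]
      induction k with
      | zero => simpa using hx
      | succ k ih =>
        have := (hJiff _ (hcon k)).1 ih
        convert this using 1
        push_cast; ring
    have hb : ∃ l : ℕ, 1 ≤ l ∧ x - l * α ∈ D := by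
      by_contra hcon
      push Not at hcon
      refine hJno x (-1) (Or.inr rfl) fun k => ?_
      induction k with
      | zero => simpa using hx
      | succ k ih =>
        have h1 := hcon (k + 1) (by omega)
        have h2 := (hJiff _ h1)
        have e1 : x - ((k + 1 : ℕ) : ℝ) * α + α = x + -1 * (k * α) := by push_cast; ring
        have e2 : x + -1 * (((k + 1 : ℕ) : ℝ) * α) = x - ((k + 1 : ℕ) : ℝ) * α := by ring
        rw [e1] at h2
        rw [e2]
        exact h2.2 ih
    obtain ⟨k, hk⟩ := hf
    obtain ⟨l, hl, hl'⟩ := hb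
    exact hD x k l hl hk hl'
  have hloc : ∀ x ∈ Ioo (0 : ℝ) 1, ∀ᶠ y in 𝓝 x, A y = A x := by
    intro x hx
    by_contra hn
    obtain ⟨m, rfl⟩ := hJint x hn
    have h1 : (0 : ℤ) < m := by exact_mod_cast hx.1
    have h2 : m < (1 : ℤ) := by exact_mod_cast hx.2
    omega
  have hconst : ∀ x ∈ Ioo (0 : ℝ) 1, ∀ y ∈ Ioo (0 : ℝ) 1, A x = A y := by
    intro x hx y hy
    let _ : TopologicalSpace (Set (Fin d)) := ⊥
    have : DiscreteTopology (Set (Fin d)) := ⟨rfl⟩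
    refine isPreconnected_Ioo.constant (f := A) ?_ hx hy
    intro z hz
    refine ContinuousAt.continuousWithinAt ?_
    exact (continuousAt_const (y := A z)).congr ((hloc z hz).mono fun w hw => hw.symm)
  have h0 : ∀ x ∈ Ioo (0 : ℝ) 1, A x = A 0 := by
    intro x hx
    have h1 : ∀ᶠ y in 𝓝[>] (0 : ℝ), A y = A 0 := hside true 0
    obtain ⟨y, hy, hy'⟩ := (h1.and (Ioo_mem_nhdsGT (zero_lt_one' ℝ))).exists
    rw [hconst x hx y hy', hy]
  have hall : ∀ x, A x = A 0 := by
    intro x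
    have h1 : A x = A (Int.fract x) := by
      have := hAper x (-⌊x⌋)
      push_cast at this
      rw [← sub_eq_add_neg] at this
      exact this.symm
    rw [h1]
    rcases (Int.fract_nonneg x).eq_or_lt with h | h
    · rw [← h]
    · exact h0 _ ⟨h, Int.fract_lt_one x⟩
  refine ⟨A 0, hall, fun x => ?_⟩
  have := hAstep x
  rwa [hall x, hall (x + α)] at this

theorem atomIdx_congr {r : ℕ} {β : Fin r → ℝ} {u v : ℝ} (h : ∀ i, β i ≤ u ↔ β i ≤ v) :
    atomIdx β u = atomIdx β v := by
  unfold atomIdx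
  simp only [h]

theorem circleRepr_coe_s3 (y : ℝ) : circleRepr (y : AddCircle (1 : ℝ)) = Int.fract y := by
  have := AddCircle.coe_equivIco_mk_apply (1 : ℝ) y
  simpa [circleRepr] using this

theorem atom_right {r : ℕ} (β : Fin r → ℝ) (x : ℝ) :
    ∀ᶠ y in sideN true x, atomIdx β (Int.fract y) = atomIdx β (Int.fract x) := by
  simp only [sideN, if_true]
  have h1 : ∀ᶠ y in nhdsWithin x (Ioi x), y < (⌊x⌋ : ℝ) + 1 :=
    (eventually_lt_nhds (Int.lt_floor_add_one x)).filter_mono nhdsWithin_le_nhds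
  have h2 : ∀ᶠ y in nhdsWithin x (Ioi x), ∀ i, ¬ β i ≤ Int.fract x → y < β i + ⌊x⌋ := by
    refine eventually_all.2 fun i => ?_
    by_cases h : β i ≤ Int.fract x
    · exact Eventually.of_forall fun y h' => (h' h).elim
    · have : x < β i + ⌊x⌋ := by
        have := Int.fract_add_floor x
        linarith
      exact ((eventually_lt_nhds this).filter_mono nhdsWithin_le_nhds).mono fun y hy _ => hy
  filter_upwards [h1, h2, self_mem_nhdsWithin] with y hy1 hy2 hy3
  have hy3 : x < y := hy3
  have hfl : ⌊y⌋ = ⌊x⌋ := Int.floor_eq_iff.2 ⟨(Int.floor_le x).trans hy3.le, hy1⟩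
  have e1 := Int.fract_add_floor x
  have e2 := Int.fract_add_floor y
  rw [hfl] at e2
  refine atomIdx_congr fun i => ⟨fun h => ?_, fun h => by linarith⟩
  by_contra hn
  have := hy2 i hn
  linarith

theorem atom_left {r : ℕ} (β : Fin r → ℝ) (x : ℝ) :
    ∃ j, ∀ᶠ y in sideN false x, atomIdx β (Int.fract y) = j := by
  simp only [sideN, Bool.false_eq_true, if_false]
  have h1 : ∀ᶠ y in nhdsWithin x (Iio x), ((⌈x⌉ - 1 : ℤ) : ℝ) < y := by
    refine (eventually_gt_nhds ?_).filter_mono nhdsWithin_le_nhds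
    have := Int.ceil_lt_add_one x
    push_cast; linarith
  have h2 : ∀ᶠ y in nhdsWithin x (Iio x), ∀ i, β i + ((⌈x⌉ - 1 : ℤ) : ℝ) < x →
      β i + ((⌈x⌉ - 1 : ℤ) : ℝ) < y := by
    refine eventually_all.2 fun i => ?_
    by_cases h : β i + ((⌈x⌉ - 1 : ℤ) : ℝ) < x
    · exact ((eventually_gt_nhds h).filter_mono nhdsWithin_le_nhds).mono fun y hy _ => hy
    · exact Eventually.of_forall fun y h' => (h h').elim
  have h3 := h1.and (h2.and (self_mem_nhdsWithin (a := x) (s := Iio x)))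
  have key : ∀ y, ((⌈x⌉ - 1 : ℤ) : ℝ) < y ∧ (∀ i, β i + ((⌈x⌉ - 1 : ℤ) : ℝ) < x →
      β i + ((⌈x⌉ - 1 : ℤ) : ℝ) < y) ∧ y ∈ Iio x →
      ∀ i, β i ≤ Int.fract y ↔ β i + ((⌈x⌉ - 1 : ℤ) : ℝ) < x := by
    rintro y ⟨a, b, c⟩ i
    have c : y < x := c
    have hfl : ⌊y⌋ = ⌈x⌉ - 1 := by
      refine Int.floor_eq_iff.2 ⟨a.le, ?_⟩
      have := Int.le_ceil x
      push_cast; linarith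
    have e2 := Int.fract_add_floor y
    rw [hfl] at e2
    refine ⟨fun h => by linarith, fun h => ?_⟩
    have := b i h
    linarith
  obtain ⟨y₀, hy₀⟩ := h3.exists
  refine ⟨atomIdx β (Int.fract y₀), ?_⟩
  filter_upwards [h3] with y hy
  exact atomIdx_congr fun i => (key y hy i).trans (key y₀ hy₀ i).symm

theorem atom_cont {r : ℕ} (β : Fin r → ℝ) (x : ℝ) (h0 : Int.fract x ≠ 0)
    (hβ : ∀ i, Int.fract x ≠ β i) :
    ∀ᶠ y in nhds x, atomIdx β (Int.fract y) = atomIdx β (Int.fract x) := by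
  have e1 := Int.fract_add_floor x
  have hpos : 0 < Int.fract x := lt_of_le_of_ne (Int.fract_nonneg x) h0.symm
  have h1 : ∀ᶠ y in nhds x, y < (⌊x⌋ : ℝ) + 1 := eventually_lt_nhds (Int.lt_floor_add_one x)
  have h2 : ∀ᶠ y in nhds x, (⌊x⌋ : ℝ) < y := eventually_gt_nhds (by linarith)
  have h3 : ∀ᶠ y in nhds x, ∀ i, (β i ≤ y - ⌊x⌋ ↔ β i ≤ Int.fract x) := by
    refine eventually_all.2 fun i => ?_
    rcases lt_or_gt_of_ne (hβ i) with h | h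
    · have : x < β i + ⌊x⌋ := by linarith
      filter_upwards [eventually_lt_nhds this] with y hy
      constructor <;> intro h' <;> linarith
    · have : β i + ⌊x⌋ < x := by linarith
      filter_upwards [eventually_gt_nhds this] with y hy
      constructor <;> intro h' <;> linarith
  filter_upwards [h1, h2, h3] with y a b c
  have hfl : ⌊y⌋ = ⌊x⌋ := Int.floor_eq_iff.2 ⟨b.le, a⟩
  refine atomIdx_congr fun i => ?_
  rw [← c i, Int.fract, hfl]

theorem sigma_surj {r d : ℕ} (β : Fin r → ℝ) (hm : StrictMono β)
    (h01 : ∀ i, 0 < β i ∧ β i < 1) (σ : Fin (r + 1) → Equiv.Perm (Fin d)) (j : Fin (r + 1)) :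
    ∃ x : ℝ, sigmaOf β σ (Int.fract x) = σ j := by
  refine Fin.cases ⟨0, ?_⟩ (fun i => ⟨β i, ?_⟩) j
  · unfold sigmaOf
    congr 1
    ext
    simp only [atomIdx, Int.fract_zero, Fin.val_zero, Finset.card_eq_zero]
    refine Finset.filter_eq_empty_iff.2 fun i _ => ?_
    simpa using (h01 i).1
  · have hf : Int.fract (β i) = β i := Int.fract_eq_self.2 ⟨(h01 i).1.le, (h01 i).2⟩
    rw [hf]
    unfold sigmaOf
    congr 1
    ext
    simp only [atomIdx, hm.le_iff_le, Fin.val_succ]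
    have : (Finset.univ.filter fun k : Fin r => k ≤ i) = Finset.Iic i := by
      ext k; simp
    rw [this, Fin.card_Iic]

/-- The lifted discontinuity set. -/
def liftD {r : ℕ} (β : Fin r → ℝ) : Set ℝ :=
  {x | Int.fract x = 0 ∨ ∃ i, Int.fract x = β i}

theorem lin_indep {α : ℝ} (hα : Irrational α) {a b : ℤ} (h : (a : ℝ) * α = b) : a = 0 := by
  by_contra hne
  exact (hα.intCast_mul hne).ne_int b h

theorem liftD_conn {r : ℕ} {α : ℝ} (hα : Irrational α) (β : Fin r → ℝ)
    (hβ : MarkedPointsCond α β) (x : ℝ) (k l : ℕ) (hl : 1 ≤ l)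
    (h1 : x + k * α ∈ liftD β) (h2 : x - l * α ∈ liftD β) : ∃ m : ℤ, x = m := by
  obtain ⟨-, hm, hb1, hb2⟩ := hβ
  have e1 := Int.fract_add_floor (x + k * α)
  have e2 := Int.fract_add_floor (x - l * α)
  generalize ⌊x + k * α⌋ = u at e1
  generalize ⌊x - l * α⌋ = v at e2
  rcases h1 with h1 | ⟨i, h1⟩ <;> rcases h2 with h2 | ⟨j, h2⟩ <;> rw [h1] at e1 <;> rw [h2] at e2
  · have := lin_indep hα (a := k + l) (b := u - v) (by push_cast; linarith)
    omega
  · by_cases hj : β j = 1 - α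
    · have := lin_indep hα (a := k + l - 1) (b := u - v - 1) (by push_cast; linarith)
      have hk : k = 0 := by omega
      subst hk
      exact ⟨u, by simp at e1; linarith⟩
    · exact (hb1 j hj ⟨u - v, -(k + l), by push_cast; linarith⟩).elim
  · by_cases hi : β i = 1 - α
    · have := lin_indep hα (a := k + l + 1) (b := u - v + 1) (by push_cast; linarith)
      omega
    · exact (hb1 i hi ⟨v - u, k + l, by push_cast; linarith⟩).elim
  · by_cases hij : i = j
    · subst hij
      have := lin_indep hα (a := k + l) (b := u - v) (by push_cast; linarith)
      omega
    · by_cases hi : β i = 1 - α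
      · have hj : β j ≠ 1 - α := fun h => hij (hm.injective (hi.trans h.symm))
        exact (hb1 j hj ⟨1 + u - v, -(k + l) - 1, by push_cast; linarith⟩).elim
      · by_cases hj : β j = 1 - α
        · exact (hb1 i hi ⟨1 + v - u, k + l - 1, by push_cast; linarith⟩).elim
        · exact (hb2 i j hij hi hj ⟨v - u, k + l, by push_cast; linarith⟩).elim

theorem VST_coe {r d : ℕ} (α : ℝ) (β : Fin r → ℝ) (σ : Fin (r + 1) → Equiv.Perm (Fin d))
    (y : ℝ) (s : Fin d) : VST α β σ ((y : AddCircle (1 : ℝ)), s) =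
      (((y + α : ℝ) : AddCircle (1 : ℝ)), sigmaOf β σ (Int.fract y) s) := by
  simp [VST, rotMap, circleRepr_coe_s3]

theorem VST_iter_fst {r d : ℕ} (α : ℝ) (β : Fin r → ℝ) (σ : Fin (r + 1) → Equiv.Perm (Fin d))
    (y : ℝ) (s : Fin d) (n : ℕ) : ((VST α β σ)^[n] ((y : AddCircle (1 : ℝ)), s)).1 =
      ((y + n * α : ℝ) : AddCircle (1 : ℝ)) := by
  induction n with
  | zero => simp
  | succ n ih =>
    rw [Function.iterate_succ_apply']
    simp only [VST, rotMap]
    rw [ih, ← AddCircle.coe_add]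
    congr 1
    push_cast; ring

theorem coe_add_int (y : ℝ) (m : ℤ) :
    ((y + m : ℝ) : AddCircle (1 : ℝ)) = (y : AddCircle (1 : ℝ)) := by
  have : ((m : ℝ) : AddCircle (1 : ℝ)) = 0 :=
    (AddCircle.coe_eq_zero_iff (1 : ℝ)).2 ⟨m, by simp⟩
  rw [AddCircle.coe_add, this, add_zero]

theorem minimal_of_cond {r d : ℕ}
    (α : ℝ) (hα : Irrational α) 
    (β : Fin r → ℝ) (hβ : MarkedPointsCond α β)
    (σ : Fin (r + 1) → Equiv.Perm (Fin d)) (hmin : MinimalityCondition σ)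
    (p : AddCircle (1 : ℝ) × Fin d) :
    Dense (Set.range fun n : ℕ => (VST α β σ)^[n] p) := by
  obtain ⟨p0, s0⟩ := p
  obtain ⟨x0, rfl⟩ := QuotientAddGroup.mk_surjective p0
  set R := Set.range fun n : ℕ => (VST α β σ)^[n] ((x0 : AddCircle (1 : ℝ)), s0) with hR
  let O : ℝ → Set (Fin d) := fun y => {s | ((y : AddCircle (1 : ℝ)), s) ∈ R}
  have hper : ∀ y (m : ℤ), O (y + m) = O y := by
    intro y m
    simp only [O, coe_add_int]
  have hstep : ∀ y s, s ∈ O y → sigmaOf β σ (Int.fract y) s ∈ O (y + α) := by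
    rintro y s ⟨n, hn⟩
    refine ⟨n + 1, ?_⟩
    simp only at hn
    simp only [Function.iterate_succ_apply', hn, VST_coe]
  have hgr : ∀ x, ∀ᶠ y in sideN true x,
      sigmaOf β σ (Int.fract y) = sigmaOf β σ (Int.fract x) := fun x =>
    (atom_right β x).mono fun y hy => congrArg σ hy
  obtain ⟨A, hA, hinv⟩ := core hα (g := fun y => sigmaOf β σ (Int.fract y)) (D := liftD β)
    hper hstep
    (by
      rintro (_ | _) x
      · obtain ⟨j, hj⟩ := atom_left β x
        exact ⟨σ j, hj.mono fun y hy => congrArg σ hy⟩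
      · exact ⟨_, hgr x⟩)
    hgr
    (by
      intro x hx
      have h0 : Int.fract x ≠ 0 := fun h => hx (Or.inl h)
      have h1 : ∀ i, Int.fract x ≠ β i := fun i h => hx (Or.inr ⟨i, h⟩)
      exact (atom_cont β x h0 h1).mono fun y hy => congrArg σ hy)
    (liftD_conn hα β hβ)
  have hAne : A.Nonempty := by
    have : ∃ᶠ y in sideN true 0, ∃ s, s ∈ O y := by
      intro hcon
      obtain ⟨u, v, huv, hsub⟩ := sideN_interval true 0 hcon
      obtain ⟨n, m, hnm⟩ := dense_hit hα x0 u v huv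
      refine hsub hnm ⟨((VST α β σ)^[n] ((x0 : AddCircle (1 : ℝ)), s0)).2, n, ?_⟩
      refine Prod.ext ?_ rfl
      rw [coe_add_int]
      exact VST_iter_fst α β σ x0 s0 n
    obtain ⟨s, hs⟩ := frequently_exists.1 this
    exact ⟨s, by rw [← hA 0]; exact hs⟩
  have hAuniv : A = univ := by
    by_contra hne
    refine hmin ⟨A, hAne, hne, fun j => ?_⟩
    obtain ⟨x, hx⟩ := sigma_surj β hβ.2.1 (fun i => (hβ.1 i).2) σ j
    rw [← hx]
    exact hinv x
  rintro ⟨q, s⟩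
  obtain ⟨x, rfl⟩ := QuotientAddGroup.mk_surjective q
  have hs : s ∈ limF O true x := by rw [hA x, hAuniv]; trivial
  rw [mem_closure_iff_frequently]
  have ht : Tendsto (fun y : ℝ => ((y : AddCircle (1 : ℝ)), s)) (sideN true x)
      (nhds ((x : AddCircle (1 : ℝ)), s)) := by
    refine Tendsto.mono_left ?_ (sideN_le true x)
    exact (((AddCircle.continuous_mk' (1 : ℝ)).prodMk continuous_const).tendsto x)
  exact ht.frequently hs

theorem cond_of_minimal {r d : ℕ} (α : ℝ) (β : Fin r → ℝ)
    (σ : Fin (r + 1) → Equiv.Perm (Fin d))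
    (h : ∀ p : AddCircle (1 : ℝ) × Fin d,
        Dense (Set.range fun n : ℕ => (VST α β σ)^[n] p)) : MinimalityCondition σ := by
  rintro ⟨A, ⟨a, ha⟩, hne, hinv⟩
  apply hne
  refine eq_univ_of_forall fun s => ?_
  have hmem : ∀ n : ℕ, ((VST α β σ)^[n] ((0 : AddCircle (1 : ℝ)), a)).2 ∈ A := by
    intro n
    induction n with
    | zero => exact ha
    | succ n ih =>
      rw [Function.iterate_succ_apply']
      simp only [VST, sigmaOf]
      rw [← hinv (atomIdx β (circleRepr ((VST α β σ)^[n] (0, a)).1))]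
      exact mem_image_of_mem _ ih
  have ho : IsOpen ((Prod.snd : AddCircle (1 : ℝ) × Fin d → Fin d) ⁻¹' {s}) :=
    (isOpen_discrete {s}).preimage continuous_snd
  obtain ⟨q, hq, n, hn⟩ := (h (0, a)).inter_open_nonempty _ ho ⟨(0, s), rfl⟩
  have h1 : q.2 = s := hq
  rw [← h1, ← hn]
  exact hmem n

theorem stmt_3 {r d : ℕ} (hr : 1 ≤ r) (hd : 2 ≤ d)
    (α : ℝ) (hα : Irrational α) (hα0 : 0 < α) (hα1 : α < 1)
    (β : Fin r → ℝ) (hβ : MarkedPointsCond α β)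
    (σ : Fin (r + 1) → Equiv.Perm (Fin d)) (hσ : SigmaAdjacentCond σ) :
    (∀ p : AddCircle (1 : ℝ) × Fin d,
        Dense (Set.range fun n : ℕ => (VST α β σ)^[n] p)) ↔ MinimalityCondition σ := by
  exact ⟨cond_of_minimal α β σ, fun h => minimal_of_cond α hα β hβ σ h⟩
end

section
/- If α has unbounded partial quotients (the sequence (a_n) is unbounded), then for every T-invariant Borel probability measure μ on [0,1) × {1, …, d}, the system (T, μ) is rigid, where T is the generalized Veech–Sataev system. -/
open MeasureTheory Filter Set
open scoped ENNReal symmDiff Classical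

lemma circle_norm_coe_le (x : ℝ) : ‖(x : AddCircle (1 : ℝ))‖ ≤ |x| := by
  have h := AddCircle.norm_eq (1 : ℝ) (x := x)
  simp only [inv_one, one_mul, mul_one] at h
  rw [h]
  simpa using round_le x 0

/-! ### Continued fraction facts -/

lemma cf_inv (α : ℝ) (hα : Irrational α) (hα0 : 0 < α) (hα1 : α < 1) (n : ℕ) :
    0 < (cfPair α n).2 ∧ (cfPair α n).2 < (cfPair α n).1 ∧
    1 ≤ (qPair α n).2 ∧
    (∃ p : ℤ, ∃ e : ℤ, (e = 1 ∨ e = -1) ∧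
      (cfPair α n).2 = e * ((qPair α n).2 * α - p) ∧
      ∃ p' : ℤ, (cfPair α n).1 = -e * ((qPair α n).1 * α - p')) ∧
    ((qPair α n).2 : ℝ) * (cfPair α n).1 + (qPair α n).1 * (cfPair α n).2 = 1 := by
  induction n with
  | zero =>
    refine ⟨by simpa [cfPair] using hα0, by simpa [cfPair] using hα1, by simp [qPair],
      ⟨0, 1, Or.inl rfl, by simp [cfPair, qPair], 1, by simp [cfPair, qPair]⟩,
      by simp [cfPair, qPair]⟩
  | succ n ih =>
    obtain ⟨h0, h1, h2, ⟨p, e, he, h3, p', h4⟩, h5⟩ := ih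
    have hA : (pq α (n + 1) : ℝ) = (⌊(cfPair α n).1 / (cfPair α n).2⌋ : ℝ) := by
      have : (0 : ℤ) ≤ ⌊(cfPair α n).1 / (cfPair α n).2⌋ :=
        Int.floor_nonneg.2 (div_nonneg (h0.trans h1).le h0.le)
      have h := Int.toNat_of_nonneg this
      have : ((pq α (n + 1) : ℤ)) = ⌊(cfPair α n).1 / (cfPair α n).2⌋ := by
        simpa [pq] using h
      exact_mod_cast this
    have hA1 : (1 : ℝ) ≤ pq α (n + 1) := by
      rw [hA]
      have : (1 : ℤ) ≤ ⌊(cfPair α n).1 / (cfPair α n).2⌋ := by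
        rw [Int.le_floor]; push_cast
        rw [one_le_div h0]; exact h1.le
      exact_mod_cast this
    have hA1' : 1 ≤ pq α (n + 1) := by exact_mod_cast hA1
    have hc2 : (cfPair α (n + 1)).2 = (cfPair α n).1 - pq α (n + 1) * (cfPair α n).2 := by
      rw [hA]; rfl
    have hc1 : (cfPair α (n + 1)).1 = (cfPair α n).2 := rfl
    have hq1 : (qPair α (n + 1)).1 = (qPair α n).2 := rfl
    have hq2 : (qPair α (n + 1)).2 = pq α (n + 1) * (qPair α n).2 + (qPair α n).1 := rfl
    have hq2' : 1 ≤ (qPair α (n + 1)).2 := by rw [hq2]; nlinarith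
    have hlow : 0 ≤ (cfPair α (n + 1)).2 := by
      rw [hc2, hA]
      have := Int.floor_le ((cfPair α n).1 / (cfPair α n).2)
      rw [le_div_iff₀ h0] at this
      linarith
    have hup : (cfPair α (n + 1)).2 < (cfPair α n).2 := by
      rw [hc2, hA]
      have := Int.lt_floor_add_one ((cfPair α n).1 / (cfPair α n).2)
      rw [div_lt_iff₀ h0] at this
      linarith
    have hform : (cfPair α (n + 1)).2 = ((-e : ℤ) : ℝ) * ((qPair α (n + 1)).2 * α -
        ((pq α (n + 1) * p + p' : ℤ) : ℝ)) := by
      rw [hc2, hq2, h3, h4]; push_cast; ring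
    have hne : (cfPair α (n + 1)).2 ≠ 0 := by
      intro h
      rw [hform] at h
      have he0 : ((-e : ℤ) : ℝ) ≠ 0 := by rcases he with rfl | rfl <;> norm_num
      have h' := (mul_eq_zero.1 h).resolve_left he0
      have hirr : Irrational (((qPair α (n + 1)).2 : ℝ) * α) :=
        hα.natCast_mul (by omega)
      exact hirr.ne_int _ (sub_eq_zero.1 h')
    refine ⟨lt_of_le_of_ne hlow hne.symm, by rw [hc1]; exact hup, hq2', ⟨_, -e, ?_, hform, p, ?_⟩, ?_⟩
    · rcases he with rfl | rfl <;> simp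
    · rw [hc1, hq1, h3]; push_cast; ring
    · rw [hc2, hc1, hq1, hq2]; push_cast
      linear_combination h5

lemma cf_mul (α : ℝ) (hα : Irrational α) (hα0 : 0 < α) (hα1 : α < 1) (n : ℕ) :
    (pq α (n + 1) : ℝ) * (cfPair α n).2 ≤ (cfPair α n).1 := by
  obtain ⟨h0, h1, -⟩ := cf_inv α hα hα0 hα1 n
  have : (0 : ℤ) ≤ ⌊(cfPair α n).1 / (cfPair α n).2⌋ :=
    Int.floor_nonneg.2 (div_nonneg (h0.trans h1).le h0.le)
  have h := Int.toNat_of_nonneg this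
  have : ((pq α (n + 1) : ℤ)) = ⌊(cfPair α n).1 / (cfPair α n).2⌋ := by
    simpa [pq] using h
  have hA : (pq α (n + 1) : ℝ) = (⌊(cfPair α n).1 / (cfPair α n).2⌋ : ℝ) := by
    exact_mod_cast this
  rw [hA]
  have := Int.floor_le ((cfPair α n).1 / (cfPair α n).2)
  rwa [le_div_iff₀ h0] at this

/-- For every `k` there is `q ≥ 1` with `k q ‖q α‖ ≤ 1`. -/
lemma exists_good_q (α : ℝ) (hα : Irrational α) (hα0 : 0 < α) (hα1 : α < 1)
    (hub : ¬ BoundedPartialQuotients α) (k : ℕ) :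
    ∃ q : ℕ, 1 ≤ q ∧ (k : ℝ) * (q * ‖((q * α : ℝ) : AddCircle (1 : ℝ))‖) ≤ 1 := by
  unfold BoundedPartialQuotients at hub
  push Not at hub
  obtain ⟨m, hm, hk⟩ := hub k
  obtain ⟨n, rfl⟩ : ∃ n, m = n + 1 := ⟨m - 1, by omega⟩
  obtain ⟨h0, h1, h2, ⟨p, e, he, h3, -⟩, h5⟩ := cf_inv α hα hα0 hα1 n
  refine ⟨(qPair α n).2, h2, ?_⟩
  have hnorm : ‖(((qPair α n).2 * α : ℝ) : AddCircle (1 : ℝ))‖ ≤ (cfPair α n).2 := by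
    have e1 : (((qPair α n).2 * α : ℝ) : AddCircle (1 : ℝ))
        = (((qPair α n).2 * α - p : ℝ) : AddCircle (1 : ℝ)) := by
      have hp : ((p : ℝ) : AddCircle (1 : ℝ)) = 0 := by
        rw [AddCircle.coe_eq_zero_iff]; exact ⟨p, by simp⟩
      rw [AddCircle.coe_sub, hp, sub_zero]
    rw [e1]
    have : |((qPair α n).2 * α - p : ℝ)| = (cfPair α n).2 := by
      rw [← abs_of_pos h0, h3, abs_mul]
      rcases he with rfl | rfl <;> simp
    rw [← this]
    exact circle_norm_coe_le _
  have hmul := cf_mul α hα hα0 hα1 n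
  have hkr : (k : ℝ) ≤ pq α (n + 1) := by exact_mod_cast hk.le
  have hq : (1 : ℝ) ≤ (qPair α n).2 := by exact_mod_cast h2
  have hq' : (0 : ℝ) ≤ (qPair α n).1 := by positivity
  calc (k : ℝ) * ((qPair α n).2 * ‖(((qPair α n).2 * α : ℝ) : AddCircle (1 : ℝ))‖)
      ≤ (pq α (n + 1) : ℝ) * ((qPair α n).2 * (cfPair α n).2) := by gcongr
    _ = (qPair α n).2 * ((pq α (n + 1) : ℝ) * (cfPair α n).2) := by ring
    _ ≤ (qPair α n).2 * (cfPair α n).1 := by gcongr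
    _ ≤ 1 := by nlinarith

lemma norm_mul_pos (α : ℝ) (hα : Irrational α) (q : ℕ) (hq : 1 ≤ q) :
    0 < ‖((q * α : ℝ) : AddCircle (1 : ℝ))‖ := by
  rw [norm_pos_iff]
  intro h
  rw [AddCircle.coe_eq_zero_iff] at h
  obtain ⟨n, hn⟩ := h
  exact (hα.natCast_mul (by omega : q ≠ 0)).ne_int n (by simpa using hn.symm)

lemma good_q_tendsto (α : ℝ) (hα : Irrational α) (q : ℕ → ℕ) (hq1 : ∀ k, 1 ≤ q k)
    (hq : ∀ k : ℕ, (k : ℝ) * (q k * ‖((q k * α : ℝ) : AddCircle (1 : ℝ))‖) ≤ 1) :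
    Tendsto q atTop atTop := by
  rw [tendsto_atTop_atTop]
  intro N
  have : ∀ j : ℕ, 1 ≤ j → ∀ᶠ k : ℕ in atTop, q k ≠ j := by
    intro j hj
    have hp : 0 < j * ‖((j * α : ℝ) : AddCircle (1 : ℝ))‖ :=
      mul_pos (by exact_mod_cast hj) (norm_mul_pos α hα j hj)
    obtain ⟨K, hK⟩ := exists_nat_gt (1 / (j * ‖((j * α : ℝ) : AddCircle (1 : ℝ))‖))
    filter_upwards [eventually_ge_atTop K] with k hk h
    have h1 := hq k
    rw [h] at h1
    rw [div_lt_iff₀ hp] at hK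
    have : (K : ℝ) ≤ k := by exact_mod_cast hk
    nlinarith
  have h2 : ∀ᶠ k : ℕ in atTop, ∀ j ∈ Finset.Icc 1 N, q k ≠ j := by
    rw [Filter.eventually_all_finset]
    intro j hj
    exact this j (Finset.mem_Icc.1 hj).1
  obtain ⟨K, hK⟩ := eventually_atTop.1 h2
  refine ⟨K, fun k hk => ?_⟩
  by_contra hlt
  exact hK k hk (q k) (Finset.mem_Icc.2 ⟨hq1 k, by omega⟩) rfl

/-! ### Unique ergodicity of the rotation -/

lemma fourier_integral_zero (α : ℝ) (hα : Irrational α) (ν : Measure (AddCircle (1 : ℝ)))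
    (hν : MeasurePreserving (rotMap α) ν ν) (k : ℤ) (hk : k ≠ 0) :
    ∫ x, fourier k x ∂ν = 0 := by
  have h1 : ∫ x, fourier k (rotMap α x) ∂ν = ∫ x, fourier k x ∂ν :=
    hν.integral_comp (Homeomorph.addRight (α : AddCircle (1 : ℝ))).measurableEmbedding _
  have h2 : ∀ x, fourier k (rotMap α x)
      = fourier k x * fourier k (α : AddCircle (1 : ℝ)) := by
    intro x
    simp [rotMap, fourier_apply, smul_add, AddCircle.toCircle_add]
  simp_rw [h2] at h1
  rw [integral_mul_const] at h1
  have h3 : fourier k (α : AddCircle (1 : ℝ)) ≠ (1 : ℂ) := by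
    intro h
    rw [fourier_apply] at h
    have h' : AddCircle.toCircle (k • (α : AddCircle (1 : ℝ))) = AddCircle.toCircle (0 : AddCircle (1:ℝ)) := by
      rw [AddCircle.toCircle_zero]
      exact Subtype.ext h
    have h4 := AddCircle.injective_toCircle (one_ne_zero) h'
    rw [← AddCircle.coe_zsmul, AddCircle.coe_eq_zero_iff] at h4
    obtain ⟨n, hn⟩ := h4
    exact (hα.intCast_mul hk).ne_int n (by simpa using hn.symm)
  have : (∫ x, fourier k x ∂ν) * (fourier k (α : AddCircle (1 : ℝ)) - 1) = 0 := by
    rw [mul_sub, h1]; ring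
  exact (mul_eq_zero.1 this).resolve_right (sub_ne_zero.2 h3)

lemma invariant_eq_volume (α : ℝ) (hα : Irrational α) (ν : Measure (AddCircle (1 : ℝ)))
    [IsProbabilityMeasure ν] (hν : MeasurePreserving (rotMap α) ν ν) : ν = volume := by
  have : IsProbabilityMeasure (volume : Measure (AddCircle (1 : ℝ))) :=
    ⟨by simp [AddCircle.measure_univ]⟩
  have hvol : MeasurePreserving (rotMap α) (volume : Measure (AddCircle (1 : ℝ))) volume :=
    measurePreserving_add_right _ _
  let A : StarSubalgebra ℂ (BoundedContinuousFunction (AddCircle (1 : ℝ)) ℂ) :=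
    (fourierSubalgebra (T := 1)).comap (BoundedContinuousFunction.toContinuousMapStarₐ ℂ)
  apply ext_of_forall_mem_subalgebra_integral_eq_of_pseudoEMetric_complete_countable (𝕜 := ℂ) (A := A)
  · intro x y hxy
    obtain ⟨f, ⟨g, hg, rfl⟩, hf⟩ := fourierSubalgebra_separatesPoints (T := (1 : ℝ)) hxy
    refine ⟨_, ⟨g, ?_, rfl⟩, hf⟩
    exact ⟨BoundedContinuousFunction.mkOfCompact g, hg, rfl⟩
  · intro g hg
    have hg' : (g : C(AddCircle (1 : ℝ), ℂ)) ∈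
        Submodule.span ℂ (Set.range (@fourier (1 : ℝ))) := by
      rw [← fourierSubalgebra_coe]
      exact hg
    have key : ∀ f ∈ Submodule.span ℂ (Set.range (@fourier (1 : ℝ))),
        ∫ x, f x ∂ν = ∫ x, f x := by
      have hint : ∀ (P : Measure (AddCircle (1 : ℝ))) [IsFiniteMeasure P]
          (f : C(AddCircle (1 : ℝ), ℂ)), Integrable (fun x => f x) P := by
        intro P _ f
        exact f.continuous.integrable_of_hasCompactSupport (HasCompactSupport.of_compactSpace _)
      intro f hf
      induction hf using Submodule.span_induction with
      | mem f hf =>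
        obtain ⟨k, rfl⟩ := hf
        by_cases hk : k = 0
        · subst hk; simp
        · rw [fourier_integral_zero α hα ν hν k hk, fourier_integral_zero α hα _ hvol k hk]
      | zero => simp
      | add f g _ _ hf hg =>
        simp only [ContinuousMap.add_apply]
        rw [integral_add (hint _ f) (hint _ g), integral_add (hint _ f) (hint _ g), hf, hg]
      | smul c f _ hf =>
        simp only [ContinuousMap.smul_apply, integral_smul, hf]
    exact key _ hg'

/-! ### The rigidity criterion -/

lemma rigid_criterion {d : ℕ} (T : AddCircle (1 : ℝ) × Fin d → AddCircle (1 : ℝ) × Fin d)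
    (μ : Measure (AddCircle (1 : ℝ) × Fin d)) [IsProbabilityMeasure μ]
    (hT : MeasurePreserving T μ μ) (hinj : Function.Injective T)
    (q : ℕ → ℕ) (hq : Tendsto q atTop atTop)
    (t : ℕ → AddCircle (1 : ℝ)) (ht : Tendsto t atTop (nhds 0))
    (Bad : ℕ → Set (AddCircle (1 : ℝ) × Fin d))
    (hBad : Tendsto (fun n => μ (Bad n)) atTop (nhds 0))
    (hgood : ∀ n, ∀ z ∉ Bad n, T^[q n] z = (z.1 + t n, z.2)) : Rigid T μ := by
  refine ⟨q, hq, ?_⟩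
  have hTq : ∀ n, MeasurePreserving (T^[q n]) μ μ := fun n => hT.iterate _
  have hinjq : ∀ n, Function.Injective (T^[q n]) := fun n => hinj.iterate _
  have main : ∀ A : Set (AddCircle (1 : ℝ) × Fin d), MeasurableSet A →
      Tendsto (fun n => μ (A \ (T^[q n]) ⁻¹' A)) atTop (nhds 0) := by
    intro A hA
    rw [ENNReal.tendsto_nhds_zero]
    intro ε hε
    have hε3 : ε / 3 ≠ 0 := (ENNReal.div_pos hε.ne' (by simp)).ne'
    obtain ⟨K, hKA, hK, hKm⟩ := hA.exists_isCompact_sdiff_lt (measure_ne_top μ A) hε3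
    obtain ⟨U, hAU, hU, -, hUm⟩ := hA.exists_isOpen_sdiff_lt (measure_ne_top μ A) hε3
    have hev : ∀ᶠ s : AddCircle (1 : ℝ) in nhds 0, ∀ z ∈ K, (z.1 + s, z.2) ∈ U := by
      apply hK.eventually_forall_of_forall_eventually
      intro z hz
      have hc : Continuous (fun w : AddCircle (1 : ℝ) × (AddCircle (1 : ℝ) × Fin d) =>
        (w.2.1 + w.1, w.2.2)) := by fun_prop
      apply hc.continuousAt.eventually_mem
      apply hU.mem_nhds
      simpa using hAU (hKA hz)
    filter_upwards [ht.eventually hev, (ENNReal.tendsto_nhds_zero.1 hBad) (ε / 3) (pos_iff_ne_zero.2 hε3)]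
      with n hn hb
    have hsub : A \ (T^[q n]) ⁻¹' A ⊆ (A \ K) ∪ Bad n ∪ (T^[q n]) ⁻¹' (U \ A) := by
      intro z ⟨hz, hz'⟩
      by_cases hzK : z ∈ K
      · by_cases hzB : z ∈ Bad n
        · exact Or.inl (Or.inr hzB)
        · refine Or.inr ⟨?_, hz'⟩
          rw [hgood n z hzB]
          exact hn z hzK
      · exact Or.inl (Or.inl ⟨hz, hzK⟩)
    calc μ (A \ (T^[q n]) ⁻¹' A) ≤ μ ((A \ K) ∪ Bad n ∪ (T^[q n]) ⁻¹' (U \ A)) := measure_mono hsub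
      _ ≤ μ (A \ K) + μ (Bad n) + μ ((T^[q n]) ⁻¹' (U \ A)) :=
        (measure_union_le _ _).trans (by gcongr; exact measure_union_le _ _)
      _ ≤ ε / 3 + ε / 3 + ε / 3 := by
        rw [(hTq n).measure_preimage (hU.measurableSet.diff hA).nullMeasurableSet]
        gcongr
      _ = ε := ENNReal.add_thirds ε
  intro A hA
  have hsum := (main A hA).add (main Aᶜ hA.compl)
  rw [add_zero] at hsum
  refine tendsto_of_tendsto_of_tendsto_of_le_of_le tendsto_const_nhds hsum (fun _ => zero_le) ?_
  intro n
  have hemb : MeasurableEmbedding (T^[q n]) := (hTq n).measurable.measurableEmbedding (hinjq n)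
  have hm : MeasurableSet (((T^[q n]) '' A) ∆ A) := (hemb.measurableSet_image.2 hA).symmDiff hA
  show μ (((T^[q n]) '' A) ∆ A) ≤ _
  rw [← (hTq n).measure_preimage hm.nullMeasurableSet]
  refine (measure_mono ?_).trans (measure_union_le _ _)
  rw [Set.preimage_symmDiff, Set.preimage_image_eq _ (hinjq n)]
  intro z hz
  rcases hz with ⟨h1, h2⟩ | ⟨h1, h2⟩
  · exact Or.inl ⟨h1, h2⟩
  · exact Or.inr ⟨h2, fun h => h h1⟩

/-! ### The cocycle -/

/-- The cocycle over the rotation. -/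
noncomputable def cocyc {r d : ℕ} (α : ℝ) (β : Fin r → ℝ) (σ : Fin (r + 1) → Equiv.Perm (Fin d))
    (x : AddCircle (1 : ℝ)) : ℕ → Equiv.Perm (Fin d)
  | 0 => 1
  | n + 1 => sigmaOf β σ (circleRepr (x + ((n * α : ℝ) : AddCircle (1 : ℝ)))) * cocyc α β σ x n

lemma VST_iterate {r d : ℕ} (α : ℝ) (β : Fin r → ℝ) (σ : Fin (r + 1) → Equiv.Perm (Fin d))
    (n : ℕ) (x : AddCircle (1 : ℝ)) (s : Fin d) :
    (VST α β σ)^[n] (x, s) = (x + ((n * α : ℝ) : AddCircle (1 : ℝ)), cocyc α β σ x n s) := by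
  induction n with
  | zero => simp [cocyc]
  | succ n ih =>
    rw [Function.iterate_succ_apply', ih]
    simp only [VST, rotMap, cocyc, Equiv.Perm.mul_apply, Prod.mk.injEq, and_true]
    rw [add_assoc, ← AddCircle.coe_add]
    congr 2
    push_cast; ring

lemma VST_injective {r d : ℕ} (α : ℝ) (β : Fin r → ℝ) (σ : Fin (r + 1) → Equiv.Perm (Fin d)) :
    Function.Injective (VST α β σ) := by
  rintro ⟨x, s⟩ ⟨y, t⟩ h
  simp only [VST, rotMap, Prod.mk.injEq, add_left_inj] at h
  obtain ⟨rfl, h⟩ := h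
  rw [(Equiv.injective _) h]

lemma atomIdx_eq {r : ℕ} (β : Fin r → ℝ) (u v : AddCircle (1 : ℝ)) (ρ : ℝ)
    (huv : ‖v - u‖ ≤ ρ) (h0 : ρ < ‖u‖)
    (hβ : ∀ i, ρ < ‖u - (β i : AddCircle (1 : ℝ))‖) :
    atomIdx β (circleRepr u) = atomIdx β (circleRepr v) := by
  obtain ⟨a, ha, rfl⟩ : ∃ a ∈ Set.Ico (0 : ℝ) (0 + 1), (a : AddCircle (1 : ℝ)) = u := by
    have := AddCircle.coe_image_Ico_eq (1 : ℝ) 0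
    have hu : u ∈ (QuotientAddGroup.mk '' Set.Ico (0:ℝ) (0 + 1) : Set (AddCircle (1 : ℝ))) := by
      rw [this]; trivial
    exact hu
  obtain ⟨t, ht, htv⟩ : ∃ t : ℝ, |t| ≤ ρ ∧ (t : AddCircle (1 : ℝ)) = v - a := by
    obtain ⟨b, hb⟩ := QuotientAddGroup.mk_surjective (v - (a : AddCircle (1 : ℝ)))
    refine ⟨b - round b, ?_, ?_⟩
    · have := AddCircle.norm_eq (1 : ℝ) (x := b)
      simp only [inv_one, one_mul, mul_one] at this
      rw [← this]
      change ‖(b : AddCircle (1:ℝ))‖ ≤ ρ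
      rw [show (b : AddCircle (1:ℝ)) = v - a from hb]
      exact huv
    · rw [← hb, AddCircle.coe_sub]
      have : (((round b : ℤ) : ℝ) : AddCircle (1 : ℝ)) = 0 := by
        rw [AddCircle.coe_eq_zero_iff]; exact ⟨round b, by simp⟩
      rw [this, sub_zero]
  have hv : v = ((a + t : ℝ) : AddCircle (1 : ℝ)) := by
    rw [AddCircle.coe_add, htv]; abel
  simp only [zero_add, Set.mem_Ico] at ha
  have hn1 : ‖(a : AddCircle (1 : ℝ))‖ ≤ |a| := circle_norm_coe_le _
  have hn2 : ‖(a : AddCircle (1 : ℝ))‖ ≤ |a - 1| := by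
    have : (a : AddCircle (1 : ℝ)) = ((a - 1 : ℝ) : AddCircle (1 : ℝ)) := by
      rw [AddCircle.coe_sub, AddCircle.coe_period, sub_zero]
    rw [this]; exact circle_norm_coe_le _
  have htt := abs_le.1 ht
  rw [abs_of_nonneg ha.1] at hn1
  rw [abs_of_nonpos (by linarith)] at hn2
  have hr1 : circleRepr (a : AddCircle (1 : ℝ)) = a := by
    unfold circleRepr
    rw [AddCircle.equivIco_coe_eq (by simpa using ha)]
  have hr2 : circleRepr v = a + t := by
    unfold circleRepr
    rw [hv, AddCircle.equivIco_coe_eq (by constructor <;> linarith)]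
  rw [hr1, hr2]
  have hiff : ∀ i, β i ≤ a ↔ β i ≤ a + t := by
    intro i
    have h1 := hβ i
    rw [← AddCircle.coe_sub] at h1
    have h2 := h1.trans_le (circle_norm_coe_le (a - β i))
    rcases lt_abs.1 h2 with h3 | h3
    · constructor <;> intro <;> linarith
    · constructor <;> intro <;> linarith
  unfold atomIdx
  simp only [hiff]

/-- The bad set on the circle. -/
noncomputable def badC {r : ℕ} (α : ℝ) (β : Fin r → ℝ) (q : ℕ) (ρ : ℝ) : Set (AddCircle (1 : ℝ)) :=
  ⋃ k ∈ Finset.range q, (fun x => x + ((k * α : ℝ) : AddCircle (1 : ℝ))) ⁻¹'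
    (Metric.closedBall 0 ρ ∪ ⋃ i : Fin r, Metric.closedBall (β i : AddCircle (1 : ℝ)) ρ)

lemma badC_measurable {r : ℕ} (α : ℝ) (β : Fin r → ℝ) (q : ℕ) (ρ : ℝ) :
    MeasurableSet (badC α β q ρ) := by
  unfold badC
  refine Finset.measurableSet_biUnion _ fun k _ => ?_
  apply (measurable_add_const _)
  exact Metric.isClosed_closedBall.measurableSet.union
    (MeasurableSet.iUnion fun i => Metric.isClosed_closedBall.measurableSet)

lemma badC_volume {r : ℕ} (α : ℝ) (β : Fin r → ℝ) (q : ℕ) (ρ : ℝ) (hρ : 0 ≤ ρ) :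
    volume (badC α β q ρ) ≤ ENNReal.ofReal (q * ((1 + r) * (2 * ρ))) := by
  have hball : ∀ p : AddCircle (1 : ℝ), volume (Metric.closedBall p ρ) ≤ ENNReal.ofReal (2 * ρ) := by
    intro p
    rw [AddCircle.volume_closedBall]
    exact ENNReal.ofReal_le_ofReal (min_le_right _ _)
  unfold badC
  refine (measure_biUnion_finset_le _ _).trans ?_
  have : ∀ k ∈ Finset.range q, volume ((fun x => x + ((k * α : ℝ) : AddCircle (1 : ℝ))) ⁻¹'
    (Metric.closedBall 0 ρ ∪ ⋃ i : Fin r, Metric.closedBall (β i : AddCircle (1 : ℝ)) ρ))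
      ≤ ENNReal.ofReal ((1 + r) * (2 * ρ)) := by
    intro k _
    rw [measure_preimage_add_right]
    refine (measure_union_le _ _).trans ?_
    have h2 : volume (⋃ i : Fin r, Metric.closedBall (β i : AddCircle (1 : ℝ)) ρ)
        ≤ ENNReal.ofReal (r * (2 * ρ)) := by
      refine (measure_iUnion_fintype_le _ _).trans ((Finset.sum_le_sum fun i _ => hball _).trans ?_)
      rw [Finset.sum_const, Finset.card_univ, Fintype.card_fin, nsmul_eq_mul,
        ENNReal.ofReal_mul (p := (r : ℝ)) (by positivity), ENNReal.ofReal_natCast]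
    refine (add_le_add (hball 0) h2).trans ?_
    rw [← ENNReal.ofReal_add (by positivity) (by positivity)]
    apply ENNReal.ofReal_le_ofReal
    linarith
  refine (Finset.sum_le_sum this).trans ?_
  rw [Finset.sum_const, Finset.card_range, nsmul_eq_mul, ENNReal.ofReal_mul (p := (q : ℝ)) (by positivity),
    ENNReal.ofReal_natCast]

lemma cocyc_eq {r d : ℕ} (α : ℝ) (β : Fin r → ℝ) (σ : Fin (r + 1) → Equiv.Perm (Fin d))
    (q : ℕ) (ρ : ℝ) (x y : AddCircle (1 : ℝ)) (hx : x ∉ badC α β q ρ) (hxy : ‖y - x‖ ≤ ρ) :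
    ∀ n ≤ q, cocyc α β σ y n = cocyc α β σ x n := by
  intro n hn
  induction n with
  | zero => rfl
  | succ n ih =>
    simp only [cocyc]
    rw [ih (by omega)]
    congr 1
    unfold sigmaOf
    congr 1
    simp only [badC, Set.mem_iUnion, Finset.mem_range, Set.mem_preimage, Set.mem_union,
      Metric.mem_closedBall, not_exists, not_or, not_le, dist_eq_norm, sub_zero] at hx
    obtain ⟨h1, h2⟩ := hx n (by omega)
    refine (atomIdx_eq β _ _ ρ ?_ h1 h2).symm
    rw [add_sub_add_right_eq_sub]
    exact hxy

lemma VST_iterate_mul {r d : ℕ} (α : ℝ) (β : Fin r → ℝ) (σ : Fin (r + 1) → Equiv.Perm (Fin d))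
    (q M : ℕ) (x : AddCircle (1 : ℝ)) (s : Fin d)
    (hx : x ∉ badC α β q (M * ‖((q * α : ℝ) : AddCircle (1 : ℝ))‖)) :
    ∀ m ≤ M, (VST α β σ)^[q * m] (x, s) =
      (x + m • ((q * α : ℝ) : AddCircle (1 : ℝ)), ((cocyc α β σ x q) ^ m) s) := by
  intro m hm
  induction m with
  | zero => simp
  | succ m ih =>
    rw [Nat.mul_succ, Nat.add_comm, Function.iterate_add_apply, ih (by omega), VST_iterate,
      cocyc_eq α β σ q _ x _ hx _ q le_rfl, pow_succ', Equiv.Perm.mul_apply, succ_nsmul, add_assoc]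
    rw [add_sub_cancel_left]
    refine (norm_nsmul_le).trans ?_
    gcongr
    omega

theorem stmt_10 {r d : ℕ} (hr : 1 ≤ r) (hd : 2 ≤ d)
    (α : ℝ) (hα : Irrational α) (hα0 : 0 < α) (hα1 : α < 1)
    (β : Fin r → ℝ) (hβ : MarkedPointsCond α β)
    (σ : Fin (r + 1) → Equiv.Perm (Fin d)) (hσ : SigmaAdjacentCond σ)
    (hub : ¬ BoundedPartialQuotients α) :
    ∀ μ : Measure (AddCircle (1 : ℝ) × Fin d), IsProbabilityMeasure μ →
      MeasurePreserving (VST α β σ) μ μ → Rigid (VST α β σ) μ := by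
  intro μ hμ hT
  choose q hq1 hq using exists_good_q α hα hα0 hα1 hub
  have hqt := good_q_tendsto α hα q hq1 hq
  have hM : 0 < d.factorial := Nat.factorial_pos d
  -- the projection to the circle is Lebesgue measure
  have hν : μ.map Prod.fst = volume := by
    have : IsProbabilityMeasure (μ.map Prod.fst) :=
      Measure.isProbabilityMeasure_map measurable_fst.aemeasurable
    apply invariant_eq_volume α hα
    have hrm : Measurable (rotMap α) := measurable_add_const _
    refine ⟨hrm, ?_⟩
    rw [Measure.map_map hrm measurable_fst]
    have : rotMap α ∘ Prod.fst = Prod.fst ∘ VST α β σ := rfl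
    rw [this, ← Measure.map_map measurable_fst hT.measurable, hT.map_eq]
  set δ : ℕ → ℝ := fun k => ‖((q k * α : ℝ) : AddCircle (1 : ℝ))‖ with hδ
  have hqδ : Tendsto (fun k => (q k : ℝ) * δ k) atTop (nhds 0) := by
    refine squeeze_zero' (g := fun k : ℕ => 1 / (k : ℝ)) (Eventually.of_forall fun k => by positivity) ?_
      tendsto_one_div_atTop_nhds_zero_nat
    filter_upwards [eventually_gt_atTop 0] with k hk
    have hk' : (0 : ℝ) < k := by exact_mod_cast hk
    rw [le_div_iff₀ hk', mul_comm]
    exact hq k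
  have hδt : Tendsto δ atTop (nhds 0) := by
    refine squeeze_zero (fun k => norm_nonneg _) (fun k => ?_) hqδ
    have : (1 : ℝ) ≤ q k := by exact_mod_cast hq1 k
    exact le_mul_of_one_le_left (norm_nonneg _) this
  refine rigid_criterion _ μ hT (VST_injective α β σ) (fun k => q k * d.factorial) ?_
    (fun k => d.factorial • ((q k * α : ℝ) : AddCircle (1 : ℝ))) ?_
    (fun k => Prod.fst ⁻¹' badC α β (q k) (d.factorial * δ k)) ?_ ?_
  · exact tendsto_atTop_mono (fun k => Nat.le_mul_of_pos_right _ hM) hqt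
  · have h := (tendsto_zero_iff_norm_tendsto_zero.2 hδt).const_smul d.factorial
    simpa using h
  · have h1 : Tendsto (fun k => ENNReal.ofReal
        (q k * ((1 + r) * (2 * (d.factorial * δ k))))) atTop (nhds 0) := by
      rw [← ENNReal.ofReal_zero]
      apply ENNReal.tendsto_ofReal
      have := hqδ.const_mul ((1 + r) * (2 * (d.factorial : ℝ)))
      rw [mul_zero] at this
      refine this.congr fun k => by ring
    refine tendsto_of_tendsto_of_tendsto_of_le_of_le tendsto_const_nhds h1 (fun _ => zero_le) ?_
    intro k
    show μ (Prod.fst ⁻¹' badC α β (q k) (d.factorial * δ k)) ≤ _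
    rw [← Measure.map_apply measurable_fst (badC_measurable α β _ _), hν]
    exact badC_volume α β _ _ (by positivity)
  · rintro k ⟨x, s⟩ hz
    rw [VST_iterate_mul α β σ (q k) d.factorial x s hz _ le_rfl]
    have : (cocyc α β σ x (q k)) ^ d.factorial = 1 := by
      have h := pow_card_eq_one (x := cocyc α β σ x (q k))
      rwa [Fintype.card_perm, Fintype.card_fin] at h
    rw [this]; rfl
end
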